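/- arXiv:1910.04809 — 2 statements merged into one kernel-verified Lean document; each statement's English description precedes it below -/
import Mathlib

section
/- Let V be a continuous divergence-free vector field on an open set S ⊆ ℝ^n whose flow φ_t is defined for all time on S. Then the time-t flow maps preserve Lebesgue measure: for every measurable A ⊆ S and t ∈ ℝ, the Lebesgue measure of φ_t(A) equals that of A. -/
open Set MeasureTheory

noncomputable def vdiv {n : ℕ} (V : EuclideanSpace ℝ (Fin n) → EuclideanSpace ℝ (Fin n))
    (x : EuclideanSpace ℝ (Fin n)) : ℝ :=
  ∑ i, fderiv ℝ V x (EuclideanSpace.single i 1) i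

/-!
Along an orbit, the spatial derivative `M t` of the flow solves the first variation equation
`M' = fderiv V (φ t x) ∘ M`, `M 0 = id`: the solution of this linear equation exists for all times,
and Grönwall's inequality compares it with the difference of two orbits. By Liouville's formula
`(det M)' = tr (fderiv V (φ t x)) * det M = 0`, so `det M = 1`, and the change of variables
inequality shows that no `φ t` increases the measure. As `φ (-t)` is inverse to `φ t`, none
decreases it either.
-/

open scoped NNReal Topology

section Liouville

theorem hasDerivWithinAt_matrix_det {𝕜 ι : Type*} [NontriviallyNormedField 𝕜] [Fintype ι]
    [DecidableEq ι] {M : 𝕜 → Matrix ι ι 𝕜} {M' : Matrix ι ι 𝕜} {s : Set 𝕜} {t : 𝕜}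
    (hM : ∀ i j, HasDerivWithinAt (fun u => M u i j) (M' i j) s t) :
    HasDerivWithinAt (fun u => (M u).det) (∑ i, ((M t).updateCol i (M'.col i)).det) s t := by
  have leibniz_updateCol : ∑ i, ((M t).updateCol i (M'.col i)).det =
      ∑ σ : Equiv.Perm ι, ((Equiv.Perm.sign σ : ℤ) : 𝕜) *
        ∑ i, (∏ j ∈ Finset.univ.erase i, M t (σ j) j) • M' (σ i) i := by
    simp only [Matrix.det_apply', Finset.mul_sum]
    rw [Finset.sum_comm]
    refine Finset.sum_congr rfl fun σ _ => Finset.sum_congr rfl fun i _ => ?_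
    rw [← Finset.prod_erase_mul _ _ (Finset.mem_univ i), Matrix.updateCol_self, smul_eq_mul,
      Matrix.col_apply]
    congr 2
    exact Finset.prod_congr rfl fun j hj => Matrix.updateCol_ne (Finset.ne_of_mem_erase hj)
  rw [leibniz_updateCol]
  simp only [Matrix.det_apply']
  exact HasDerivWithinAt.fun_sum fun σ _ =>
    (HasDerivWithinAt.fun_finsetProd fun i _ => hM (σ i) i).const_mul _

theorem sum_det_updateCol_mul {R ι : Type*} [CommRing R] [Fintype ι] [DecidableEq ι]
    (A M : Matrix ι ι R) :
    ∑ i, (M.updateCol i ((A * M).col i)).det = A.trace * M.det := by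
  have hcramer : ∀ i, (M.updateCol i ((A * M).col i)).det = (M.adjugate * (A * M)) i i := by
    intro i
    rw [← Matrix.cramer_apply, Matrix.cramer_eq_adjugate_mulVec]
    rfl
  calc ∑ i, (M.updateCol i ((A * M).col i)).det = (M.adjugate * (A * M)).trace :=
        Finset.sum_congr rfl fun i _ => hcramer i
    _ = (M * M.adjugate * A).trace := by rw [← mul_assoc, Matrix.trace_mul_cycle]
    _ = A.trace * M.det := by
        rw [Matrix.mul_adjugate, smul_mul_assoc, one_mul, Matrix.trace_smul, smul_eq_mul, mul_comm]

variable {𝕜 E : Type*} [NontriviallyNormedField 𝕜] [CompleteSpace 𝕜] [NormedAddCommGroup E]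
  [NormedSpace 𝕜 E] [FiniteDimensional 𝕜 E]

theorem hasDerivWithinAt_det_of_hasDerivWithinAt_comp {M : 𝕜 → E →L[𝕜] E} {A : E →L[𝕜] E}
    {s : Set 𝕜} {t : 𝕜} (hM : HasDerivWithinAt M (A ∘L M t) s t) :
    HasDerivWithinAt (fun u => (M u).det) (LinearMap.trace 𝕜 E A * (M t).det) s t := by
  let b := Module.finBasis 𝕜 E
  have hentry : ∀ i j, HasDerivWithinAt (fun u => LinearMap.toMatrix b b (M u) i j)
      ((LinearMap.toMatrix b b A * LinearMap.toMatrix b b (M t)) i j) s t := by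
    intro i j
    have hcol : HasDerivWithinAt (fun u => M u (b j)) (A (M t (b j))) s t := by
      simpa using hM.clm_apply (hasDerivWithinAt_const t s (b j))
    rw [← LinearMap.toMatrix_comp]
    simpa [LinearMap.toMatrix_apply, Function.comp_def] using
      (LinearMap.toContinuousLinearMap (b.coord i)).hasFDerivAt.comp_hasDerivWithinAt t hcol
  have hdet : ∀ u, (M u).det = (LinearMap.toMatrix b b (M u)).det := fun u =>
    (LinearMap.det_toMatrix b _).symm
  simp only [hdet, LinearMap.trace_eq_matrix_trace 𝕜 b]
  rw [← sum_det_updateCol_mul]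
  exact hasDerivWithinAt_matrix_det hentry

end Liouville

theorem det_eq_of_hasDerivWithinAt_comp_of_trace_eq_zero {E : Type*}
    [NormedAddCommGroup E] [NormedSpace ℝ E] [FiniteDimensional ℝ E] {M A : ℝ → E →L[ℝ] E} {a b : ℝ}
    (hM : ∀ t ∈ Icc a b, HasDerivWithinAt M (A t ∘L M t) (Icc a b) t)
    (hA : ∀ t ∈ Icc a b, LinearMap.trace ℝ E (A t) = 0) {t : ℝ} (ht : t ∈ Icc a b) :
    (M t).det = (M a).det := by
  have hdet : ∀ t ∈ Icc a b, HasDerivWithinAt (fun u => (M u).det) 0 (Icc a b) t := by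
    intro t ht
    simpa only [hA t ht, zero_mul] using hasDerivWithinAt_det_of_hasDerivWithinAt_comp (hM t ht)
  exact constant_of_has_deriv_right_zero (fun t ht => (hdet t ht).continuousWithinAt)
    (fun t ht => (hdet t (Ico_subset_Icc_self ht)).mono_of_mem_nhdsWithin
      (Icc_mem_nhdsGE_of_mem ht)) t ht

section Gronwall

theorem gronwallBound_mul (c δ K ε x : ℝ) :
    gronwallBound (c * δ) K (c * ε) x = c * gronwallBound δ K ε x := by
  unfold gronwallBound
  split_ifs <;> ring

variable {X : Type*} [NormedAddCommGroup X] [NormedSpace ℝ X] {f f' : ℝ → X} {a b : ℝ}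

theorem norm_le_gronwallBound_of_hasDerivWithinAt {K ε : ℝ}
    (hf : ∀ t ∈ Icc a b, HasDerivWithinAt f (f' t) (Icc a b) t)
    (hbound : ∀ t ∈ Ico a b, ‖f' t‖ ≤ K * ‖f t‖ + ε) :
    ∀ t ∈ Icc a b, ‖f t‖ ≤ gronwallBound ‖f a‖ K ε (t - a) :=
  norm_le_gronwallBound_of_norm_deriv_right_le (fun t ht => (hf t ht).continuousWithinAt)
    (fun t ht => (hf t (Ico_subset_Icc_self ht)).mono_of_mem_nhdsWithin
      (Icc_mem_nhdsGE_of_mem ht)) le_rfl hbound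

theorem norm_le_mul_exp_of_norm_deriv_le_of_norm_lt {K r : ℝ} (hK : 0 ≤ K)
    (hf : ∀ t ∈ Icc a b, HasDerivWithinAt f (f' t) (Icc a b) t)
    (hbound : ∀ t ∈ Ico a b, ‖f t‖ < r → ‖f' t‖ ≤ K * ‖f t‖)
    (hr : ‖f a‖ * Real.exp (K * (b - a)) < r) :
    ∀ t ∈ Icc a b, ‖f t‖ ≤ ‖f a‖ * Real.exp (K * (t - a)) := by
  -- A strict supersolution which stays below `r` keeps `f` where the hypothesis applies.
  obtain ⟨η, hη, hηr⟩ : ∃ η > 0, (‖f a‖ + η) * Real.exp ((K + η) * (b - a)) < r := by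
    have hcont : Continuous fun η => (‖f a‖ + η) * Real.exp ((K + η) * (b - a)) := by fun_prop
    have hsmall : ∀ᶠ η in 𝓝[>] (0 : ℝ), (‖f a‖ + η) * Real.exp ((K + η) * (b - a)) < r :=
      (hcont.continuousAt.eventually_lt continuousAt_const (by simpa using hr)).filter_mono
        nhdsWithin_le_nhds
    exact (eventually_mem_nhdsWithin.and hsmall).exists
  have hbarrier_lt : ∀ t ∈ Ico a b, (‖f a‖ + η) * Real.exp ((K + η) * (t - a)) < r := by
    intro t ht
    refine lt_of_le_of_lt ?_ hηr
    gcongr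
    exact ht.2.le
  have hf_right : ∀ t ∈ Ico a b, HasDerivWithinAt f (f' t) (Ici t) t := fun t ht =>
    (hf t (Ico_subset_Icc_self ht)).mono_of_mem_nhdsWithin (Icc_mem_nhdsGE_of_mem ht)
  have hbarrier : ∀ t ∈ Icc a b, ‖f t‖ ≤ (‖f a‖ + η) * Real.exp ((K + η) * (t - a)) := by
    refine image_norm_le_of_norm_deriv_right_lt_deriv_boundary
      (B' := fun t => (‖f a‖ + η) * (Real.exp ((K + η) * (t - a)) * (K + η)))
      (fun t ht => (hf t ht).continuousWithinAt) hf_right (by simp [hη.le]) (fun t => ?_) ?_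
    · simpa using ((((hasDerivAt_id t).sub_const a).const_mul (K + η)).exp).const_mul (‖f a‖ + η)
    · intro t ht heq
      have hpos : 0 < ‖f t‖ := by rw [heq]; positivity
      calc ‖f' t‖ ≤ K * ‖f t‖ := hbound t ht (heq ▸ hbarrier_lt t ht)
        _ < (K + η) * ‖f t‖ := by gcongr; linarith
        _ = (‖f a‖ + η) * (Real.exp ((K + η) * (t - a)) * (K + η)) := by rw [heq]; ring
  have hgronwall := norm_le_gronwallBound_of_hasDerivWithinAt (K := K) (ε := 0) hf fun t ht => by
    rw [add_zero]
    exact hbound t ht ((hbarrier t (Ico_subset_Icc_self ht)).trans_lt (hbarrier_lt t ht))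
  simpa only [gronwallBound_ε0] using hgronwall

end Gronwall

section GlobalExistence

variable {X : Type*} [NormedAddCommGroup X] [NormedSpace ℝ X]

/-- The radial retraction of a normed space onto the closed ball of radius `R` about the origin,
used to cut off a vector field of linear growth. -/
noncomputable def radialRetraction (R : ℝ) (x : X) : X :=
  (R / max R ‖x‖) • x

theorem radialRetraction_of_norm_le {R : ℝ} (hR : 0 < R) {x : X} (hx : ‖x‖ ≤ R) :
    radialRetraction R x = x := by
  rw [radialRetraction, max_eq_left hx, div_self hR.ne', one_smul]

theorem norm_radialRetraction {R : ℝ} (hR : 0 < R) (x : X) :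
    ‖radialRetraction R x‖ = R / max R ‖x‖ * ‖x‖ := by
  rw [radialRetraction, norm_smul, Real.norm_of_nonneg (by positivity)]

theorem norm_radialRetraction_le {R : ℝ} (hR : 0 < R) (x : X) : ‖radialRetraction R x‖ ≤ R := by
  have hmax : 0 < max R ‖x‖ := lt_max_of_lt_left hR
  rw [norm_radialRetraction hR, div_mul_eq_mul_div, div_le_iff₀ hmax]
  gcongr
  exact le_max_right _ _

theorem norm_radialRetraction_le_norm {R : ℝ} (hR : 0 < R) (x : X) :
    ‖radialRetraction R x‖ ≤ ‖x‖ := by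
  have hmax : 0 < max R ‖x‖ := lt_max_of_lt_left hR
  rw [norm_radialRetraction hR]
  exact mul_le_of_le_one_left (norm_nonneg x) ((div_le_one hmax).2 (le_max_left _ _))

theorem lipschitzWith_radialRetraction {R : ℝ} (hR : 0 < R) :
    LipschitzWith 2 (radialRetraction R : X → X) := by
  refine LipschitzWith.of_dist_le_mul fun x y => ?_
  rw [dist_eq_norm, dist_eq_norm]
  set p := max R ‖x‖ with hp_def
  set q := max R ‖y‖ with hq_def
  have hp : 0 < p := lt_max_of_lt_left hR
  have hq : 0 < q := lt_max_of_lt_left hR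
  have hRp : R / p ≤ 1 := (div_le_one hp).2 (le_max_left _ _)
  have hqp : |q - p| ≤ ‖x - y‖ := by
    rw [norm_sub_rev]
    exact (abs_max_sub_max_le_max R ‖y‖ R ‖x‖).trans
      (max_le (by simp) (abs_norm_sub_norm_le y x))
  have hsplit : radialRetraction R x - radialRetraction R y =
      (R / p) • (x - y) + ((q - p) / p) • radialRetraction R y := by
    have hcoeff : (q - p) / p * (R / q) = R / p - R / q := by field_simp
    simp only [radialRetraction, ← hp_def, ← hq_def, smul_smul, hcoeff]
    module
  calc ‖radialRetraction R x - radialRetraction R y‖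
      ≤ ‖(R / p) • (x - y)‖ + ‖((q - p) / p) • radialRetraction R y‖ :=
        hsplit ▸ norm_add_le _ _
    _ = R / p * ‖x - y‖ + |q - p| / p * ‖radialRetraction R y‖ := by
        rw [norm_smul, norm_smul, Real.norm_of_nonneg (by positivity), Real.norm_eq_abs,
          abs_div, abs_of_pos hp]
    _ ≤ R / p * ‖x - y‖ + ‖x - y‖ / p * R := by
        gcongr
        exact norm_radialRetraction_le hR y
    _ = R / p * (2 * ‖x - y‖) := by ring
    _ ≤ (2 : ℝ≥0) * ‖x - y‖ := mul_le_of_le_one_left (by positivity) hRp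

variable [CompleteSpace X] {v : ℝ → X → X} {K : ℝ≥0} {a b : ℝ}

theorem exists_forall_hasDerivWithinAt_of_norm_le (hab : a ≤ b)
    (hlip : ∀ t ∈ Icc a b, LipschitzWith K (v t))
    (hcont : ∀ x, ContinuousOn (fun t => v t x) (Icc a b)) {L : ℝ≥0}
    (hL : ∀ t ∈ Icc a b, ∀ x, ‖v t x‖ ≤ L) (x₀ : X) :
    ∃ α : ℝ → X, α a = x₀ ∧ ∀ t ∈ Icc a b, HasDerivWithinAt α (v t (α t)) (Icc a b) t := by
  have hpicard : IsPicardLindelof v (⟨a, left_mem_Icc.2 hab⟩ : Icc a b) x₀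
      (L * (b - a).toNNReal) 0 L K :=
    { lipschitzOnWith := fun t ht => (hlip t ht).lipschitzOnWith
      continuousOn := fun x _ => hcont x
      norm_le := fun t ht x _ => hL t ht x
      mul_max_le := by simp [hab] }
  exact hpicard.exists_eq_forall_mem_Icc_hasDerivWithinAt₀

theorem exists_forall_hasDerivWithinAt_of_lipschitzWith (hab : a ≤ b)
    (hlip : ∀ t ∈ Icc a b, LipschitzWith K (v t))
    (hcont : ∀ x, ContinuousOn (fun t => v t x) (Icc a b)) (x₀ : X) :
    ∃ α : ℝ → X, α a = x₀ ∧ ∀ t ∈ Icc a b, HasDerivWithinAt α (v t (α t)) (Icc a b) t := by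
  obtain ⟨B, hB⟩ := isCompact_Icc.exists_bound_of_continuousOn (hcont 0)
  have hB0 : 0 ≤ B := (norm_nonneg _).trans (hB a (left_mem_Icc.2 hab))
  have hgrowth : ∀ t ∈ Icc a b, ∀ x, ‖v t x‖ ≤ K * ‖x‖ + B := by
    intro t ht x
    have hdist := (hlip t ht).norm_sub_le x 0
    rw [sub_zero] at hdist
    linarith [norm_le_norm_sub_add (v t x) (v t 0), hB t ht]
  let R := gronwallBound ‖x₀‖ K B (b - a) + 1
  have hmono : Monotone (gronwallBound ‖x₀‖ K B) :=
    gronwallBound_mono (norm_nonneg x₀) hB0 K.coe_nonneg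
  have hR : 0 < R := by
    have hstart := hmono (sub_nonneg.2 hab)
    rw [gronwallBound_x0] at hstart
    linarith [norm_nonneg x₀]
  obtain ⟨α, hαa, hα⟩ := exists_forall_hasDerivWithinAt_of_norm_le hab
    (v := fun t x => v t (radialRetraction R x)) (L := .mk (K * R + B) (by positivity))
    (fun t ht => (hlip t ht).comp (lipschitzWith_radialRetraction hR)) (fun x => hcont _)
    (fun t ht x => (hgrowth t ht _).trans
      (by rw [NNReal.coe_mk]; gcongr; exact norm_radialRetraction_le hR x)) x₀
  have hαR : ∀ t ∈ Icc a b, ‖α t‖ ≤ R := by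
    intro t ht
    have hα_growth : ∀ u ∈ Ico a b, ‖v u (radialRetraction R (α u))‖ ≤ K * ‖α u‖ + B :=
      fun u hu => (hgrowth u (Ico_subset_Icc_self hu) _).trans
        (by gcongr; exact norm_radialRetraction_le_norm hR (α u))
    have hα_le := norm_le_gronwallBound_of_hasDerivWithinAt hα hα_growth t ht
    rw [hαa] at hα_le
    linarith [hmono (sub_le_sub_right ht.2 a)]
  refine ⟨α, hαa, fun t ht => ?_⟩
  simpa only [radialRetraction_of_norm_le hR (hαR t ht)] using hα t ht

end GlobalExistence

theorem exists_forall_hasDerivWithinAt_comp {E : Type*} [NormedAddCommGroup E] [NormedSpace ℝ E]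
    [CompleteSpace E] {A : ℝ → E →L[ℝ] E} {a b : ℝ} (hab : a ≤ b) (hA : ContinuousOn A (Icc a b))
    (M₀ : E →L[ℝ] E) :
    ∃ M : ℝ → E →L[ℝ] E, M a = M₀ ∧
      ∀ t ∈ Icc a b, HasDerivWithinAt M (A t ∘L M t) (Icc a b) t := by
  obtain ⟨C, hC⟩ := isCompact_Icc.exists_bound_of_continuousOn hA
  refine exists_forall_hasDerivWithinAt_of_lipschitzWith (K := C.toNNReal) hab
    (v := fun t m => A t ∘L m) (fun t ht => ?_)
    (fun m => hA.clm_comp continuousOn_const) M₀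
  refine LipschitzWith.of_dist_le_mul fun m m' => ?_
  rw [dist_eq_norm, dist_eq_norm, ← ContinuousLinearMap.comp_sub]
  exact (ContinuousLinearMap.opNorm_comp_le _ _).trans
    (by gcongr; exact (hC t ht).trans (Real.le_coe_toNNReal C))

theorem eventually_forall_mem_norm_sub_sub_fderiv_le {E F : Type*} [NormedAddCommGroup E]
    [NormedSpace ℝ E] [NormedAddCommGroup F] [NormedSpace ℝ F] {S K : Set E} (hS : IsOpen S)
    {V : E → F} (hV : ContDiffOn ℝ 1 V S) (hK : IsCompact K) (hKS : K ⊆ S) {ε : ℝ} (hε : 0 < ε) :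
    ∀ᶠ h in 𝓝 (0 : E), ∀ z ∈ K, ‖V (z + h) - V z - fderiv ℝ V z h‖ ≤ ε * ‖h‖ := by
  refine hK.eventually_forall_of_forall_eventually fun z₀ hz₀ => ?_
  have hVz₀ : ContDiffAt ℝ 1 V z₀ := hV.contDiffAt (hS.mem_nhds (hKS hz₀))
  have hstrict : ∀ᶠ p : E × E in 𝓝 (0, z₀),
      ‖V (p.2 + p.1) - V p.2 - fderiv ℝ V z₀ p.1‖ ≤ ε / 2 * ‖p.1‖ := by
    have htendsto : Filter.Tendsto (fun p : E × E => (p.2 + p.1, p.2)) (𝓝 (0, z₀))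
        (𝓝 (z₀, z₀)) := by
      have hcont : Continuous fun p : E × E => (p.2 + p.1, p.2) := by fun_prop
      simpa using hcont.tendsto (0, z₀)
    simpa using htendsto.eventually
      ((hVz₀.hasStrictFDerivAt one_ne_zero).isLittleO.def (half_pos hε))
  have hfderiv : ∀ᶠ p : E × E in 𝓝 (0, z₀), ‖fderiv ℝ V z₀ - fderiv ℝ V p.2‖ ≤ ε / 2 := by
    have hcont : ContinuousAt (fderiv ℝ V) z₀ :=
      (hVz₀.fderiv_right (m := 0) (by norm_num)).continuousAt
    have htendsto := (hcont.tendsto.comp (continuousAt_snd (p := ((0 : E), z₀)))).const_sub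
      (fderiv ℝ V z₀)
    rw [sub_self] at htendsto
    exact htendsto.norm.eventually_le_const (by simpa using half_pos hε)
  filter_upwards [hstrict, hfderiv] with ⟨h, z⟩ hTaylor hderiv
  calc ‖V (z + h) - V z - fderiv ℝ V z h‖
      = ‖(V (z + h) - V z - fderiv ℝ V z₀ h) + (fderiv ℝ V z₀ - fderiv ℝ V z) h‖ := by
        rw [sub_apply, sub_add_sub_cancel]
    _ ≤ ε / 2 * ‖h‖ + ε / 2 * ‖h‖ :=
        (norm_add_le _ _).trans
          (add_le_add hTaylor (ContinuousLinearMap.le_of_opNorm_le _ hderiv h))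
    _ = ε * ‖h‖ := by ring

section IntegralCurve

variable {E : Type*} [NormedAddCommGroup E] [NormedSpace ℝ E] {S : Set E} {V : E → E}

theorem eq_of_isIntegralCurve_of_contDiffOn (hS : IsOpen S) (hV : ContDiffOn ℝ 1 V S)
    {γ₁ γ₂ : ℝ → E} (hγ₁ : IsIntegralCurve γ₁ fun _ => V) (hγ₁S : ∀ t, γ₁ t ∈ S)
    (hγ₂ : IsIntegralCurve γ₂ fun _ => V) {t₀ : ℝ} (h : γ₁ t₀ = γ₂ t₀) : γ₁ = γ₂ := by
  have hclopen : IsClopen {t | γ₁ t = γ₂ t} := by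
    refine ⟨isClosed_eq hγ₁.continuous hγ₂.continuous, isOpen_iff_mem_nhds.2 fun t ht => ?_⟩
    obtain ⟨K, s, hs₁, hK⟩ :=
      (hV.contDiffAt (hS.mem_nhds (hγ₁S t))).exists_lipschitzOnWith
    have hs₂ : s ∈ 𝓝 (γ₂ t) := (show γ₁ t = γ₂ t from ht) ▸ hs₁
    refine ODE_solution_unique_of_eventually (v := fun _ => V) (s := fun _ => s) (K := K)
      (.of_forall fun _ => hK) ?_ ?_ ht
    · filter_upwards [hγ₁.continuous.continuousAt.preimage_mem_nhds hs₁] with u hu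
      exact ⟨hγ₁ u, hu⟩
    · filter_upwards [hγ₂.continuous.continuousAt.preimage_mem_nhds hs₂] with u hu
      exact ⟨hγ₂ u, hu⟩
  funext t
  exact eq_univ_iff_forall.1 (hclopen.eq_univ ⟨t₀, h⟩) t

/-- `φ` is the flow of the vector field `V` on `S`, defined for all times: from every point of `S`
starts an integral curve `t ↦ φ t x` which stays in `S`. No condition is put on `φ` or `V` outside
of `S`. -/
structure IsGlobalFlow (φ : ℝ → E → E) (V : E → E) (S : Set E) : Prop where
  zero_apply : ∀ x ∈ S, φ 0 x = x
  mem : ∀ t, ∀ x ∈ S, φ t x ∈ S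
  isIntegralCurve : ∀ x ∈ S, IsIntegralCurve (fun t => φ t x) fun _ => V

namespace IsGlobalFlow

variable {φ : ℝ → E → E}

theorem add_apply (hφ : IsGlobalFlow φ V S) (hS : IsOpen S) (hV : ContDiffOn ℝ 1 V S) {x : E}
    (hx : x ∈ S) (s t : ℝ) : φ (s + t) x = φ s (φ t x) := by
  have hcurve : (fun s => φ (s + t) x) = fun s => φ s (φ t x) :=
    eq_of_isIntegralCurve_of_contDiffOn hS hV (t₀ := 0)
      ((hφ.isIntegralCurve x hx).comp_add t) (fun s => hφ.mem _ x hx)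
      (hφ.isIntegralCurve _ (hφ.mem t x hx))
      (by simp only [zero_add, hφ.zero_apply _ (hφ.mem t x hx)])
  exact congrFun hcurve s

theorem neg_apply_apply (hφ : IsGlobalFlow φ V S) (hS : IsOpen S) (hV : ContDiffOn ℝ 1 V S) {x : E}
    (hx : x ∈ S) (t : ℝ) : φ (-t) (φ t x) = x := by
  rw [← hφ.add_apply hS hV hx, neg_add_cancel, hφ.zero_apply x hx]

theorem neg (hφ : IsGlobalFlow φ V S) : IsGlobalFlow (fun t => φ (-t)) (fun x => -V x) S where
  zero_apply x hx := by rw [neg_zero, hφ.zero_apply x hx]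
  mem t := hφ.mem (-t)
  isIntegralCurve x hx t := by
    simpa [Function.comp_def] using (hφ.isIntegralCurve x hx (-t)).scomp t (hasDerivAt_neg t)

theorem continuous_fderiv_apply (hφ : IsGlobalFlow φ V S) (hS : IsOpen S)
    (hV : ContDiffOn ℝ 1 V S) {x : E} (hx : x ∈ S) : Continuous fun t => fderiv ℝ V (φ t x) :=
  (hV.continuousOn_fderiv_of_isOpen hS le_rfl).comp_continuous
    (hφ.isIntegralCurve x hx).continuous fun t => hφ.mem t x hx

theorem exists_norm_fderiv_le (hφ : IsGlobalFlow φ V S) (hS : IsOpen S) (hV : ContDiffOn ℝ 1 V S)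
    {x : E} (hx : x ∈ S) (a b : ℝ) :
    ∃ C : ℝ≥0, ∀ t ∈ Icc a b, ‖fderiv ℝ V (φ t x)‖ ≤ C := by
  obtain ⟨C, hC⟩ := isCompact_Icc.exists_bound_of_continuousOn
    (hφ.continuous_fderiv_apply hS hV hx).continuousOn
  exact ⟨C.toNNReal, fun t ht => (hC t ht).trans (Real.le_coe_toNNReal C)⟩

theorem exists_norm_sub_sub_fderiv_le (hφ : IsGlobalFlow φ V S) (hS : IsOpen S)
    (hV : ContDiffOn ℝ 1 V S) {x : E} (hx : x ∈ S) (a b : ℝ) {ε : ℝ} (hε : 0 < ε) :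
    ∃ r > 0, ∀ t ∈ Icc a b, ∀ z, ‖z - φ t x‖ < r →
      ‖V z - V (φ t x) - fderiv ℝ V (φ t x) (z - φ t x)‖ ≤ ε * ‖z - φ t x‖ := by
  have horbit : IsCompact ((fun t => φ t x) '' Icc a b) :=
    isCompact_Icc.image (hφ.isIntegralCurve x hx).continuous
  have horbit_subset : (fun t => φ t x) '' Icc a b ⊆ S := image_subset_iff.2 fun t _ =>
    hφ.mem t x hx
  obtain ⟨r, hr, hTaylor⟩ := Metric.eventually_nhds_iff.1
    (eventually_forall_mem_norm_sub_sub_fderiv_le hS hV horbit horbit_subset hε)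
  refine ⟨r, hr, fun t ht z hz => ?_⟩
  simpa only [add_sub_cancel] using
    hTaylor (y := z - φ t x) (by rwa [dist_zero_right]) _ (mem_image_of_mem _ ht)

theorem hasDerivAt_sub (hφ : IsGlobalFlow φ V S) {x y : E} (hx : x ∈ S) (hy : y ∈ S) (t : ℝ) :
    HasDerivAt (fun t => φ t y - φ t x) (V (φ t y) - V (φ t x)) t :=
  (hφ.isIntegralCurve y hy t).sub (hφ.isIntegralCurve x hx t)

theorem exists_eventually_norm_sub_le (hφ : IsGlobalFlow φ V S) (hS : IsOpen S)
    (hV : ContDiffOn ℝ 1 V S) {x : E} (hx : x ∈ S) (T : ℝ) :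
    ∃ L : ℝ≥0, ∀ᶠ y in 𝓝 x, ∀ t ∈ Icc 0 T, ‖φ t y - φ t x‖ ≤ L * ‖y - x‖ := by
  obtain ⟨C, hC⟩ := hφ.exists_norm_fderiv_le hS hV hx 0 T
  obtain ⟨r, hr, hTaylor⟩ := hφ.exists_norm_sub_sub_fderiv_le hS hV hx 0 T one_pos
  have hnear : ∀ᶠ y in 𝓝 x, ‖y - x‖ * Real.exp ((C + 1) * (T - 0)) < r := by
    have hcont : Continuous fun y => ‖y - x‖ * Real.exp ((C + 1) * (T - 0)) := by fun_prop
    exact hcont.continuousAt.eventually_lt continuousAt_const (by simpa using hr)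
  refine ⟨.mk (Real.exp ((C + 1) * T)) (Real.exp_pos _).le, ?_⟩
  filter_upwards [hnear, hS.mem_nhds hx] with y hyr hyS t ht
  have hstart : φ 0 y - φ 0 x = y - x := by rw [hφ.zero_apply y hyS, hφ.zero_apply x hx]
  have hbound : ∀ t ∈ Ico 0 T, ‖φ t y - φ t x‖ < r →
      ‖V (φ t y) - V (φ t x)‖ ≤ (C + 1) * ‖φ t y - φ t x‖ := by
    intro t ht hlt
    have ht' := Ico_subset_Icc_self ht
    have hlinear := (fderiv ℝ V (φ t x)).le_of_opNorm_le (hC t ht') (φ t y - φ t x)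
    linarith [norm_le_norm_sub_add (V (φ t y) - V (φ t x)) (fderiv ℝ V (φ t x) (φ t y - φ t x)),
      hTaylor t ht' _ hlt]
  calc ‖φ t y - φ t x‖ ≤ ‖φ 0 y - φ 0 x‖ * Real.exp ((C + 1) * (t - 0)) :=
        norm_le_mul_exp_of_norm_deriv_le_of_norm_lt (by positivity)
          (fun t _ => (hφ.hasDerivAt_sub hx hyS t).hasDerivWithinAt) hbound
          (by rwa [hstart]) t ht
    _ ≤ Real.exp ((C + 1) * T) * ‖y - x‖ := by
        rw [hstart, sub_zero, mul_comm]
        gcongr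
        exact ht.2

theorem eventually_norm_sub_sub_fderiv_le (hφ : IsGlobalFlow φ V S) (hS : IsOpen S)
    (hV : ContDiffOn ℝ 1 V S) {x : E} (hx : x ∈ S) (T : ℝ) {ε : ℝ} (hε : 0 < ε) :
    ∀ᶠ y in 𝓝 x, ∀ t ∈ Icc 0 T,
      ‖V (φ t y) - V (φ t x) - fderiv ℝ V (φ t x) (φ t y - φ t x)‖ ≤ ε * ‖y - x‖ := by
  obtain ⟨L, hL⟩ := hφ.exists_eventually_norm_sub_le hS hV hx T
  obtain ⟨r, hr, hTaylor⟩ := hφ.exists_norm_sub_sub_fderiv_le hS hV hx 0 T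
    (ε := ε / (L + 1)) (by positivity)
  have hnear : ∀ᶠ y in 𝓝 x, L * ‖y - x‖ < r := by
    have hcont : Continuous fun y => L * ‖y - x‖ := by fun_prop
    exact hcont.continuousAt.eventually_lt continuousAt_const (by simpa using hr)
  filter_upwards [hL, hnear] with y hyL hyr t ht
  calc ‖V (φ t y) - V (φ t x) - fderiv ℝ V (φ t x) (φ t y - φ t x)‖
      ≤ ε / (L + 1) * ‖φ t y - φ t x‖ := hTaylor t ht _ ((hyL t ht).trans_lt hyr)
    _ ≤ ε / (L + 1) * ((L + 1) * ‖y - x‖) := by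
        gcongr
        exact (hyL t ht).trans (by gcongr; simp)
    _ = ε * ‖y - x‖ := by field_simp

theorem hasFDerivAt (hφ : IsGlobalFlow φ V S) (hS : IsOpen S) (hV : ContDiffOn ℝ 1 V S) {x : E}
    (hx : x ∈ S) {T : ℝ} (hT : 0 ≤ T) {M : ℝ → E →L[ℝ] E} (hM0 : M 0 = .id ℝ E)
    (hM : ∀ t ∈ Icc 0 T, HasDerivWithinAt M (fderiv ℝ V (φ t x) ∘L M t) (Icc 0 T) t) :
    HasFDerivAt (φ T) (M T) x := by
  obtain ⟨C, hC⟩ := hφ.exists_norm_fderiv_le hS hV hx 0 T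
  rw [hasFDerivAt_iff_isLittleO, Asymptotics.isLittleO_iff]
  intro c hc
  obtain ⟨ε, hε, hεc⟩ : ∃ ε > 0, gronwallBound 0 C ε T < c := by
    have hsmall : ∀ᶠ ε in 𝓝[>] (0 : ℝ), gronwallBound 0 C ε T < c :=
      ((gronwallBound_continuous_ε 0 C T).continuousAt.eventually_lt continuousAt_const
        (by rwa [gronwallBound_ε0_δ0])).filter_mono nhdsWithin_le_nhds
    exact (eventually_mem_nhdsWithin.and hsmall).exists
  filter_upwards [hφ.eventually_norm_sub_sub_fderiv_le hS hV hx T hε, hS.mem_nhds hx]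
    with y hTaylor hyS
  have hderiv : ∀ t ∈ Icc 0 T, HasDerivWithinAt (fun t => φ t y - φ t x - M t (y - x))
      (V (φ t y) - V (φ t x) - fderiv ℝ V (φ t x) (M t (y - x))) (Icc 0 T) t := by
    intro t ht
    refine (hφ.hasDerivAt_sub hx hyS t).hasDerivWithinAt.sub ?_
    simpa using (hM t ht).clm_apply (hasDerivWithinAt_const t _ (y - x))
  have hbound : ∀ t ∈ Ico 0 T, ‖V (φ t y) - V (φ t x) - fderiv ℝ V (φ t x) (M t (y - x))‖ ≤
      C * ‖φ t y - φ t x - M t (y - x)‖ + ‖y - x‖ * ε := by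
    intro t ht
    have ht' := Ico_subset_Icc_self ht
    have hlinear := (fderiv ℝ V (φ t x)).le_of_opNorm_le (hC t ht') (φ t y - φ t x - M t (y - x))
    rw [map_sub] at hlinear
    linarith [norm_sub_le_norm_sub_add_norm_sub (V (φ t y) - V (φ t x))
      (fderiv ℝ V (φ t x) (φ t y - φ t x)) (fderiv ℝ V (φ t x) (M t (y - x))), hTaylor t ht']
  have hstart : φ 0 y - φ 0 x - M 0 (y - x) = 0 := by
    simp [hM0, hφ.zero_apply y hyS, hφ.zero_apply x hx]
  calc ‖φ T y - φ T x - M T (y - x)‖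
      ≤ gronwallBound (‖y - x‖ * 0) C (‖y - x‖ * ε) T := by
        simpa only [hstart, norm_zero, mul_zero, sub_zero] using
          norm_le_gronwallBound_of_hasDerivWithinAt hderiv hbound T (right_mem_Icc.2 hT)
    _ = ‖y - x‖ * gronwallBound 0 C ε T := gronwallBound_mul _ _ _ _ _
    _ ≤ c * ‖y - x‖ := by
        rw [mul_comm]
        gcongr

section FiniteDimensional

variable [FiniteDimensional ℝ E]

theorem exists_hasFDerivAt_det_eq_one (hφ : IsGlobalFlow φ V S) (hS : IsOpen S)
    (hV : ContDiffOn ℝ 1 V S) (htrace : ∀ x ∈ S, LinearMap.trace ℝ E (fderiv ℝ V x) = 0) {x : E}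
    (hx : x ∈ S) {T : ℝ} (hT : 0 ≤ T) : ∃ D : E →L[ℝ] E, HasFDerivAt (φ T) D x ∧ D.det = 1 := by
  obtain ⟨M, hM0, hM⟩ := exists_forall_hasDerivWithinAt_comp hT
    (hφ.continuous_fderiv_apply hS hV hx).continuousOn (.id ℝ E)
  refine ⟨M T, hφ.hasFDerivAt hS hV hx hT hM0 hM, ?_⟩
  rw [det_eq_of_hasDerivWithinAt_comp_of_trace_eq_zero hM
    (fun t _ => htrace _ (hφ.mem t x hx)) (right_mem_Icc.2 hT), hM0]
  exact LinearMap.det_id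

variable [MeasurableSpace E] [BorelSpace E] (μ : Measure E) [μ.IsAddHaarMeasure]

theorem addHaar_image_le_of_nonneg (hφ : IsGlobalFlow φ V S) (hS : IsOpen S)
    (hV : ContDiffOn ℝ 1 V S) (htrace : ∀ x ∈ S, LinearMap.trace ℝ E (fderiv ℝ V x) = 0)
    {t : ℝ} (ht : 0 ≤ t) {A : Set E} (hA : A ⊆ S) : μ (φ t '' A) ≤ μ A := by
  choose! D hD hdet using fun x hx =>
    hφ.exists_hasFDerivAt_det_eq_one hS hV htrace (x := x) hx ht
  let A' := toMeasurable μ A ∩ S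
  have hA' : MeasurableSet A' := (measurableSet_toMeasurable μ A).inter hS.measurableSet
  calc μ (φ t '' A) ≤ μ (φ t '' A') :=
        measure_mono (image_mono (subset_inter (subset_toMeasurable μ A) hA))
    _ ≤ ∫⁻ x in A', ENNReal.ofReal |(D x).det| ∂μ :=
        addHaar_image_le_lintegral_abs_det_fderiv μ hA'
          fun x hx => (hD x hx.2).hasFDerivWithinAt
    _ = ∫⁻ _ in A', 1 ∂μ := setLIntegral_congr_fun hA' fun x hx => by simp [hdet x hx.2]
    _ = μ A' := setLIntegral_one A'
    _ ≤ μ A := (measure_mono inter_subset_left).trans (measure_toMeasurable A).le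

theorem addHaar_image_le (hφ : IsGlobalFlow φ V S) (hS : IsOpen S) (hV : ContDiffOn ℝ 1 V S)
    (htrace : ∀ x ∈ S, LinearMap.trace ℝ E (fderiv ℝ V x) = 0) (t : ℝ) {A : Set E} (hA : A ⊆ S) :
    μ (φ t '' A) ≤ μ A := by
  rcases le_total 0 t with ht | ht
  · exact hφ.addHaar_image_le_of_nonneg μ hS hV htrace ht hA
  · have htrace_neg : ∀ x ∈ S, LinearMap.trace ℝ E (fderiv ℝ (fun x => -V x) x) = 0 := by
      intro x hx
      simp [fderiv_fun_neg, htrace x hx]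
    simpa only [neg_neg] using
      hφ.neg.addHaar_image_le_of_nonneg μ hS hV.neg htrace_neg (neg_nonneg.2 ht) hA

end FiniteDimensional

end IsGlobalFlow

end IntegralCurve

theorem trace_fderiv_eq_vdiv {n : ℕ} (V : EuclideanSpace ℝ (Fin n) → EuclideanSpace ℝ (Fin n))
    (x : EuclideanSpace ℝ (Fin n)) :
    LinearMap.trace ℝ (EuclideanSpace ℝ (Fin n)) (fderiv ℝ V x) = vdiv V x := by
  simp [LinearMap.trace_eq_sum_inner _ (EuclideanSpace.basisFun (Fin n) ℝ), vdiv,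
    EuclideanSpace.inner_single_left]

theorem stmt_16_general {E : Type*} [NormedAddCommGroup E] [NormedSpace ℝ E]
    [FiniteDimensional ℝ E] [MeasurableSpace E] [BorelSpace E] (μ : Measure E)
    [μ.IsAddHaarMeasure] {S : Set E} (hS : IsOpen S) {V : E → E} (hV : ContDiffOn ℝ 1 V S)
    (htrace : ∀ x ∈ S, LinearMap.trace ℝ E (fderiv ℝ V x) = 0) {φ : ℝ → E → E}
    (hφ : IsGlobalFlow φ V S) (t : ℝ) {A : Set E} (hA : A ⊆ S) : μ (φ t '' A) = μ A := by
  have himage : φ t '' A ⊆ S := image_subset_iff.2 fun x hx => hφ.mem t x (hA hx)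
  have hback : φ (-t) '' (φ t '' A) = A := by
    rw [image_image, image_congr fun x hx => hφ.neg_apply_apply hS hV (hA hx) t, image_id']
  refine le_antisymm (hφ.addHaar_image_le μ hS hV htrace t hA) ?_
  calc μ A = μ (φ (-t) '' (φ t '' A)) := by rw [hback]
    _ ≤ μ (φ t '' A) := hφ.addHaar_image_le μ hS hV htrace (-t) himage

/-- the flow of a C¹ divergence-free vector field preserves Lebesgue measure. -/
theorem stmt_16 {n : ℕ} (S : Set (EuclideanSpace ℝ (Fin n))) (hS : IsOpen S)
    (V : EuclideanSpace ℝ (Fin n) → EuclideanSpace ℝ (Fin n))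
    (hV : ContDiffOn ℝ 1 V S)
    (hdiv : ∀ x ∈ S, vdiv V x = 0)
    (φ : ℝ → EuclideanSpace ℝ (Fin n) → EuclideanSpace ℝ (Fin n))
    (hφ0 : ∀ x ∈ S, φ 0 x = x)
    (hφS : ∀ t : ℝ, ∀ x ∈ S, φ t x ∈ S)
    (hφflow : ∀ x ∈ S, ∀ t : ℝ, HasDerivAt (fun s => φ s x) (V (φ t x)) t) :
    ∀ (t : ℝ) (A : Set (EuclideanSpace ℝ (Fin n))), A ⊆ S → MeasurableSet A →
      volume (φ t '' A) = volume A := by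
  intro t A hAS _
  exact stmt_16_general volume hS hV (fun x hx => (trace_fderiv_eq_vdiv V x).trans (hdiv x hx))
    ⟨hφ0, hφS, hφflow⟩ t hAS
end

section
/- Let u1, u2 ∈ C^2(Ω) both solve DΔu + ∇D·∇u − σu = 0 on a connected open set Ω, with u2 > 0, and suppose u = u1/u2 is constant on a nonempty open subset U ⊆ Ω. Then u is constant on Ω (unique continuation for the ratio of solutions). -/
open scoped RealInnerProductSpace

noncomputable def lap {n : ℕ} (u : EuclideanSpace ℝ (Fin n) → ℝ)
    (x : EuclideanSpace ℝ (Fin n)) : ℝ :=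
  vdiv (gradient u) x

/-! The difference `w = u1 - k * u2` solves the same equation, and dividing by `D` gives
`|Δw| ≤ C (|w| + |∇w|)` locally. A Carleman estimate
`τ ∫ exp (2τφ) (f² + |∇f|²) ≤ C ∫ exp (2τφ) (Δf)²` for quadratic weights `φ`, applied to a cutoff
of `w` as `τ → ∞`, shows that `w` vanishes near every point at which `φ` is strictly maximal on the
support of `w`. If `w` vanishes in a ball, such a weight exists at each point of the bounding
sphere. Were the interior of `{w = 0}` not all of `Ω`, a largest ball inside it around a point close
to its boundary would have such a point on its sphere outside it. -/

open Asymptotics Filter MeasureTheory Metric Set Topology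
open scoped Gradient

section Gradient

variable {F : Type*} [NormedAddCommGroup F] [InnerProductSpace ℝ F] [CompleteSpace F]
  {u v : F → ℝ} {x : F}

lemma gradient_sub_const_mul (hu : DifferentiableAt ℝ u x) (hv : DifferentiableAt ℝ v x) (k : ℝ) :
    ∇ (fun y => u y - k * v y) x = ∇ u x - k • ∇ v x := by
  refine HasGradientAt.gradient (hasGradientAt_iff_hasFDerivAt.2 ?_)
  simpa using hu.hasFDerivAt.fun_sub (hv.hasFDerivAt.const_mul k)

lemma gradient_const_mul (hu : DifferentiableAt ℝ u x) (k : ℝ) :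
    ∇ (fun y => k * u y) x = k • ∇ u x := by
  refine HasGradientAt.gradient (hasGradientAt_iff_hasFDerivAt.2 ?_)
  simpa using hu.hasFDerivAt.const_mul k

lemma gradient_exp_neg_mul (hu : DifferentiableAt ℝ u x) (hv : DifferentiableAt ℝ v x) :
    ∇ (fun y => Real.exp (-u y) * v y) x = Real.exp (-u x) • (∇ v x - v x • ∇ u x) := by
  refine HasGradientAt.gradient (hasGradientAt_iff_hasFDerivAt.2 ?_)
  refine (hu.hasFDerivAt.neg.exp.mul hv.hasFDerivAt).congr_fderiv ?_
  simp only [map_smul, map_sub, toDual_gradient]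
  module

lemma contDiffAt_gradient {m k : WithTop ℕ∞} (hu : ContDiffAt ℝ k u x) (hmk : m + 1 ≤ k) :
    ContDiffAt ℝ m (∇ u) x :=
  (InnerProductSpace.toDual ℝ F).symm.toContinuousLinearEquiv.contDiff.contDiffAt.comp x
    (hu.fderiv_right hmk)

lemma contDiff_gradient {m k : WithTop ℕ∞} (hu : ContDiff ℝ k u) (hmk : m + 1 ≤ k) :
    ContDiff ℝ m (∇ u) :=
  contDiff_iff_contDiffAt.2 fun _ => contDiffAt_gradient hu.contDiffAt hmk

lemma hasCompactSupport_gradient (hu : HasCompactSupport u) : HasCompactSupport (∇ u) :=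
  (hu.fderiv (𝕜 := ℝ)).comp_left (map_zero (InnerProductSpace.toDual ℝ F).symm)

lemma hasCompactSupport_of_eq_zero_of_gradient_eq_zero {β : Type*} [Zero β] {g : F → β}
    (hu : HasCompactSupport u) (hg : ∀ x, u x = 0 → ∇ u x = 0 → g x = 0) : HasCompactSupport g := by
  refine hu.mono' fun x hx => ?_
  contrapose! hx
  have hu0 : u =ᶠ[𝓝 x] fun _ => 0 := notMem_tsupport_iff_eventuallyEq.1 hx
  exact Function.notMem_support.2 (hg x hu0.eq_of_nhds (by simp [hu0.gradient_eq]))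

lemma inner_fderiv_gradient_comm (hu : ContDiffAt ℝ 2 u x) (a b : F) :
    ⟪fderiv ℝ (∇ u) x a, b⟫ = ⟪fderiv ℝ (∇ u) x b, a⟫ := by
  have hfd : DifferentiableAt ℝ (fderiv ℝ u) x :=
    (hu.fderiv_right (m := 1) (by norm_num)).differentiableAt one_ne_zero
  have hgrad : DifferentiableAt ℝ (∇ u) x :=
    (contDiffAt_gradient hu (m := 1) (by norm_num)).differentiableAt one_ne_zero
  have inner_eq (a b : F) : ⟪fderiv ℝ (∇ u) x a, b⟫ = fderiv ℝ (fderiv ℝ u) x a b := by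
    have h := fderiv_inner_apply (𝕜 := ℝ) hgrad (differentiableAt_const b) a
    simp only [inner_gradient_left] at h
    simpa [fderiv_clm_apply hfd (differentiableAt_const b)] using h.symm
  rw [inner_eq, inner_eq]
  exact hu.isSymmSndFDerivAt (by simp) a b

end Gradient

section Divergence

variable {n : ℕ} {u v : EuclideanSpace ℝ (Fin n) → ℝ}
  {V W : EuclideanSpace ℝ (Fin n) → EuclideanSpace ℝ (Fin n)} {x : EuclideanSpace ℝ (Fin n)}

lemma vdiv_sub (hV : DifferentiableAt ℝ V x) (hW : DifferentiableAt ℝ W x) :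
    vdiv (fun y => V y - W y) x = vdiv V x - vdiv W x := by
  simp [vdiv, fderiv_fun_sub hV hW]

lemma vdiv_const_smul (c : ℝ) (hV : DifferentiableAt ℝ V x) :
    vdiv (fun y => c • V y) x = c * vdiv V x := by
  simp [vdiv, fderiv_fun_const_smul hV, Finset.mul_sum]

lemma vdiv_smul (hu : DifferentiableAt ℝ u x) (hV : DifferentiableAt ℝ V x) :
    vdiv (fun y => u y • V y) x = u x * vdiv V x + fderiv ℝ u x (V x) := by
  have fderiv_apply_eq_sum :
      fderiv ℝ u x (V x) = ∑ i, V x i * fderiv ℝ u x (EuclideanSpace.single i 1) := by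
    conv_lhs => rw [← (EuclideanSpace.basisFun (Fin n) ℝ).sum_repr (V x)]
    simp [map_sum]
  rw [vdiv, vdiv, fderiv_fun_smul hu hV, fderiv_apply_eq_sum, Finset.mul_sum,
    ← Finset.sum_add_distrib]
  simp [mul_comm]

lemma vdiv_smul_gradient (hu : DifferentiableAt ℝ u x) (hv : ContDiffAt ℝ 2 v x) :
    vdiv (fun y => u y • ∇ v y) x = u x * lap v x + ⟪∇ u x, ∇ v x⟫ := by
  have hgrad := (contDiffAt_gradient hv (m := 1) (by norm_num)).differentiableAt one_ne_zero
  rw [vdiv_smul hu hgrad, inner_gradient_left, lap]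

lemma vdiv_congr (h : V =ᶠ[𝓝 x] W) : vdiv V x = vdiv W x := by
  rw [vdiv, vdiv, h.fderiv_eq]

lemma lap_congr (h : u =ᶠ[𝓝 x] v) : lap u x = lap v x :=
  vdiv_congr h.gradient

lemma lap_sub_const_mul (hu : ContDiffAt ℝ 2 u x) (hv : ContDiffAt ℝ 2 v x) (k : ℝ) :
    lap (fun y => u y - k * v y) x = lap u x - k * lap v x := by
  have gradient_eq : ∇ (fun y => u y - k * v y) =ᶠ[𝓝 x] fun y => ∇ u y - k • ∇ v y := by
    filter_upwards [hu.eventually (by simp), hv.eventually (by simp)] with y huy hvy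
    exact gradient_sub_const_mul (huy.differentiableAt two_ne_zero)
      (hvy.differentiableAt two_ne_zero) k
  have hu' := (contDiffAt_gradient hu (m := 1) (by norm_num)).differentiableAt one_ne_zero
  have hv' := (contDiffAt_gradient hv (m := 1) (by norm_num)).differentiableAt one_ne_zero
  rw [lap, vdiv_congr gradient_eq, vdiv_sub hu' (hv'.fun_const_smul k), vdiv_const_smul k hv',
    lap, lap]

lemma lap_exp_neg_mul (hu : ContDiff ℝ 2 u) (hv : ContDiff ℝ 2 v) :
    lap (fun y => Real.exp (-u y) * v y) x =
      Real.exp (-u x) *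
        (lap v x - 2 * ⟪∇ u x, ∇ v x⟫ + (‖∇ u x‖ ^ 2 - lap u x) * v x) := by
  have hu1 := hu.differentiable two_ne_zero
  have hv1 := hv.differentiable two_ne_zero
  have hexp : DifferentiableAt ℝ (fun y => Real.exp (-u y)) x := (hu1 x).neg.exp
  have hexpv : DifferentiableAt ℝ (fun y => Real.exp (-u y) * v y) x := hexp.mul (hv1 x)
  have gradient_exp : ∇ (fun y => Real.exp (-u y)) x = -(Real.exp (-u x) • ∇ u x) := by
    simpa using gradient_exp_neg_mul (hu1 x) (differentiableAt_const (1 : ℝ))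
  have gradient_eq : ∇ (fun y => Real.exp (-u y) * v y) =
      fun y => Real.exp (-u y) • ∇ v y - (Real.exp (-u y) * v y) • ∇ u y := by
    ext1 y
    rw [gradient_exp_neg_mul (hu1 y) (hv1 y), smul_sub, smul_smul]
  have hgu := (contDiff_gradient hu (m := 1) (by norm_num)).differentiable one_ne_zero x
  have hgv := (contDiff_gradient hv (m := 1) (by norm_num)).differentiable one_ne_zero x
  rw [lap, gradient_eq, vdiv_sub (hexp.fun_smul hgv) (hexpv.fun_smul hgu),
    vdiv_smul_gradient hexp hv.contDiffAt, vdiv_smul_gradient hexpv hu.contDiffAt, gradient_exp,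
    gradient_exp_neg_mul (hu1 x) (hv1 x)]
  simp only [inner_neg_left, inner_sub_left, real_inner_smul_left, real_inner_self_eq_norm_sq,
    real_inner_comm (∇ u x) (∇ v x)]
  ring

lemma continuous_vdiv (hV : ContDiff ℝ 1 V) : Continuous (vdiv V) := by
  have := hV.continuous_fderiv one_ne_zero
  unfold vdiv
  fun_prop

lemma continuous_lap (hu : ContDiff ℝ 2 u) : Continuous (lap u) :=
  continuous_vdiv (contDiff_gradient hu (by norm_num))

lemma hasCompactSupport_vdiv (hV : HasCompactSupport V) : HasCompactSupport (vdiv V) :=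
  (hV.fderiv (𝕜 := ℝ)).comp_left
    (g := fun A : EuclideanSpace ℝ (Fin n) →L[ℝ] EuclideanSpace ℝ (Fin n) =>
      ∑ i, A (EuclideanSpace.single i 1) i) (by simp)

lemma hasCompactSupport_lap (hu : HasCompactSupport u) : HasCompactSupport (lap u) :=
  hasCompactSupport_vdiv (hasCompactSupport_gradient hu)

theorem integral_vdiv_eq_zero (hV : ContDiff ℝ 1 V) (hVc : HasCompactSupport V) :
    ∫ x, vdiv V x = 0 := by
  have hcoord (i : Fin n) : ContDiff ℝ 1 fun x => V x i := by fun_prop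
  have hcoordc (i : Fin n) : HasCompactSupport fun x => V x i :=
    hVc.comp_left (g := fun w : EuclideanSpace ℝ (Fin n) => w i) rfl
  have fderiv_coord (i : Fin n) (x w : EuclideanSpace ℝ (Fin n)) :
      fderiv ℝ V x w i = fderiv ℝ (fun y => V y i) x w := by
    have h := (EuclideanSpace.proj (𝕜 := ℝ) i).hasFDerivAt.comp x
      (hV.differentiable one_ne_zero x).hasFDerivAt
    exact (DFunLike.congr_fun h.fderiv w).symm
  have hint (i : Fin n) (w : EuclideanSpace ℝ (Fin n)) :
      Integrable fun x => fderiv ℝ (fun y => V y i) x w := by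
    have := (hcoord i).continuous_fderiv one_ne_zero
    exact Continuous.integrable_of_hasCompactSupport (by fun_prop)
      ((hcoordc i).fderiv_apply ℝ w)
  simp only [vdiv, fderiv_coord]
  rw [integral_finsetSum _ fun i _ => hint i _]
  refine Finset.sum_eq_zero fun i _ => ?_
  have h := integral_mul_fderiv_eq_neg_fderiv_mul_of_integrable (μ := volume)
    (f := fun _ => (1 : ℝ)) (g := fun y => V y i) (v := EuclideanSpace.single i 1)
    (by simp) (by simpa using hint i _)
    (by simpa using (hcoord i).continuous.integrable_of_hasCompactSupport (hcoordc i))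
    (fun x _ => by fun_prop) (fun x _ => (hcoord i).differentiable one_ne_zero x)
  simpa using h

lemma integral_le_integral_of_vdiv_add_le (hV : ContDiff ℝ 1 V) (hVc : HasCompactSupport V)
    {g h : EuclideanSpace ℝ (Fin n) → ℝ} (hg : Integrable g) (hh : Integrable h)
    (hle : ∀ x, vdiv V x + g x ≤ h x) : ∫ x, g x ≤ ∫ x, h x := by
  have hint : Integrable (vdiv V) :=
    (continuous_vdiv hV).integrable_of_hasCompactSupport (hasCompactSupport_vdiv hVc)
  calc ∫ x, g x = ∫ x, (vdiv V x + g x) := by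
        rw [integral_add hint hg, integral_vdiv_eq_zero hV hVc, zero_add]
    _ ≤ ∫ x, h x := integral_mono (hint.add hg) hh hle

end Divergence

section QuadraticWeight

variable {F : Type*} [NormedAddCommGroup F] [InnerProductSpace ℝ F] [CompleteSpace F]

/-- `φ` has constant Hessian `H`, that is, `φ` is a quadratic polynomial. These are the exponents
of the weights `exp (2 * τ * φ)` in the Carleman estimate. -/
structure HasConstHessian (φ : F → ℝ) (H : F →L[ℝ] F) : Prop where
  differentiable : Differentiable ℝ φ
  hasFDerivAt_gradient : ∀ x, HasFDerivAt (∇ φ) H x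

namespace HasConstHessian

variable {φ : F → ℝ} {H : F →L[ℝ] F} (hφ : HasConstHessian φ H)
include hφ

lemma fderiv_gradient (x : F) : fderiv ℝ (∇ φ) x = H :=
  (hφ.hasFDerivAt_gradient x).fderiv

lemma contDiff : ContDiff ℝ 2 φ := by
  have hgrad : ContDiff ℝ 1 (∇ φ) := by
    refine contDiff_one_iff_fderiv.2 ⟨fun x => (hφ.hasFDerivAt_gradient x).differentiableAt, ?_⟩
    simpa only [funext hφ.fderiv_gradient] using continuous_const
  rw [show (2 : WithTop ℕ∞) = 1 + 1 by norm_num, contDiff_succ_iff_fderiv]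
  refine ⟨hφ.differentiable, by simp, ?_⟩
  rw [← toDual_comp_gradient]
  exact (InnerProductSpace.toDual ℝ F).toContinuousLinearEquiv.contDiff.comp hgrad

lemma const_mul (c : ℝ) : HasConstHessian (fun x => c * φ x) (c • H) where
  differentiable := hφ.differentiable.const_mul c
  hasFDerivAt_gradient x := by
    rw [funext fun y => gradient_const_mul (hφ.differentiable y) c]
    exact (hφ.hasFDerivAt_gradient x).const_smul c

end HasConstHessian

lemma HasConstHessian.lap_eq_lap {n : ℕ} {φ : EuclideanSpace ℝ (Fin n) → ℝ}
    {H : EuclideanSpace ℝ (Fin n) →L[ℝ] EuclideanSpace ℝ (Fin n)} (hφ : HasConstHessian φ H)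
    (x y : EuclideanSpace ℝ (Fin n)) : lap φ x = lap φ y := by
  simp only [lap, vdiv, hφ.fderiv_gradient]

/-- `φ` is a quadratic polynomial with Hessian `H` satisfying, on `S`, a quantitative form of
Hörmander's pseudoconvexity condition for the Laplacian: the sum of the lowest eigenvalue of `H`
and of the second derivative of `φ` in the direction of `∇ φ` is positive. The number `a`
separates the two and `μ` is the margin. -/
structure IsCarlemanWeight (φ : F → ℝ) (H : F →L[ℝ] F) (a μ : ℝ) (S : Set F) : Prop
    extends HasConstHessian φ H where
  margin_pos : 0 < μ
  le_hessian : ∀ w, (a + μ) * ‖w‖ ^ 2 ≤ ⟪H w, w⟫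
  le_hessian_gradient : ∀ x ∈ S, μ ≤ ⟪H (∇ φ x), ∇ φ x⟫ + a * ‖∇ φ x‖ ^ 2

lemma IsCarlemanWeight.mono {φ : F → ℝ} {H : F →L[ℝ] F} {a μ : ℝ} {S T : Set F}
    (hφ : IsCarlemanWeight φ H a μ T) (hST : S ⊆ T) : IsCarlemanWeight φ H a μ S :=
  { hφ with le_hessian_gradient := fun x hx => hφ.le_hessian_gradient x (hST hx) }

lemma HasConstHessian.exists_isCarlemanWeight {φ : F → ℝ} {H : F →L[ℝ] F} {a μ : ℝ} {y : F}
    (hφ : HasConstHessian φ H) (hμ : 0 < μ) (hH : ∀ w, (a + μ) * ‖w‖ ^ 2 ≤ ⟪H w, w⟫)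
    (hy : 0 < ⟪H (∇ φ y), ∇ φ y⟫ + a * ‖∇ φ y‖ ^ 2) :
    ∃ μ', ∃ S ∈ 𝓝 y, IsCarlemanWeight φ H a μ' S := by
  have hgrad := (contDiff_gradient hφ.contDiff (m := 1) (by norm_num)).continuous
  obtain ⟨μ', hμ', hμ'_lt⟩ := exists_between (lt_min hμ hy)
  refine ⟨μ', {x | μ' ≤ ⟪H (∇ φ x), ∇ φ x⟫ + a * ‖∇ φ x‖ ^ 2}, ?_, hφ, hμ', fun w => ?_,
    fun x hx => hx⟩
  · refine Continuous.continuousAt (by fun_prop) |>.eventually_const_le ?_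
    exact hμ'_lt.trans_le (min_le_right _ _)
  · refine le_trans ?_ (hH w)
    gcongr
    exact hμ'_lt.le.trans (min_le_left _ _)

lemma IsCarlemanWeight.mul_sq_add_norm_sub_sq_le {φ : F → ℝ} {H : F →L[ℝ] F}
    {a μ : ℝ} {S : Set F} {B τ s : ℝ} {x : F} (hφ : IsCarlemanWeight φ H a μ S) (hτ : 1 ≤ τ)
    (hτa : 4 * a ^ 2 ≤ τ * μ) (hs : s ≠ 0 → x ∈ S ∧ ‖∇ φ x‖ ≤ B) (p : F) :
    τ * μ * (s ^ 2 + ‖p - s • τ • ∇ φ x‖ ^ 2) ≤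
      (1 + B ^ 2) * (4 * (τ * ⟪H p, p⟫ - τ * a * ‖p‖ ^ 2) +
        4 * (τ ^ 3 * (⟪H (∇ φ x), ∇ φ x⟫ + a * ‖∇ φ x‖ ^ 2) - 2 * (τ * a) ^ 2) * s ^ 2) := by
  have hτ0 : 0 < τ := one_pos.trans_le hτ
  have hμ := hφ.margin_pos
  have gradient_le : s ^ 2 * ‖∇ φ x‖ ^ 2 ≤ s ^ 2 * B ^ 2 := by
    rcases eq_or_ne s 0 with rfl | hs0
    · simp
    · gcongr
      exact (hs hs0).2
  have norm_sub_le : ‖p - s • τ • ∇ φ x‖ ^ 2 ≤ 2 * ‖p‖ ^ 2 + 2 * τ ^ 2 * (s ^ 2 * B ^ 2) := by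
    have h := parallelogram_law_with_norm ℝ p (s • τ • ∇ φ x)
    have norm_smul_sq : ‖s • τ • ∇ φ x‖ ^ 2 = τ ^ 2 * (s ^ 2 * ‖∇ φ x‖ ^ 2) := by
      simp only [norm_smul, mul_pow, Real.norm_eq_abs, sq_abs]
      ring
    nlinarith [sq_nonneg ‖p + s • τ • ∇ φ x‖, mul_le_mul_of_nonneg_left gradient_le (sq_nonneg τ)]
  have le_first : τ * μ * ‖p‖ ^ 2 ≤ τ * ⟪H p, p⟫ - τ * a * ‖p‖ ^ 2 := by
    linarith [mul_le_mul_of_nonneg_left (hφ.le_hessian p) hτ0.le]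
  have le_second : τ ^ 3 * μ * s ^ 2 ≤
      2 * (τ ^ 3 * (⟪H (∇ φ x), ∇ φ x⟫ + a * ‖∇ φ x‖ ^ 2) - 2 * (τ * a) ^ 2) * s ^ 2 := by
    rcases eq_or_ne s 0 with rfl | hs0
    · simp
    · refine mul_le_mul_of_nonneg_right ?_ (sq_nonneg s)
      nlinarith [mul_le_mul_of_nonneg_left (hφ.le_hessian_gradient x (hs hs0).1) (pow_pos hτ0 3).le,
        mul_le_mul_of_nonneg_left hτa (sq_nonneg τ)]
  calc τ * μ * (s ^ 2 + ‖p - s • τ • ∇ φ x‖ ^ 2)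
      ≤ τ * μ * (τ ^ 2 * s ^ 2 + (2 * ‖p‖ ^ 2 + 2 * τ ^ 2 * (s ^ 2 * B ^ 2))) := by
        gcongr
        exact le_mul_of_one_le_left (sq_nonneg s) (one_le_pow₀ hτ)
    _ ≤ (1 + B ^ 2) * (4 * (τ * μ * ‖p‖ ^ 2) + 2 * (τ ^ 3 * μ * s ^ 2)) := by
        have norm_term_nonneg : 0 ≤ τ * μ * ‖p‖ ^ 2 * (2 + 4 * B ^ 2) := by positivity
        have sq_term_nonneg : 0 ≤ τ ^ 3 * μ * s ^ 2 := by positivity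
        linarith
    _ ≤ _ := by
        refine mul_le_mul_of_nonneg_left ?_ (by positivity)
        linarith

end QuadraticWeight

section Carleman

variable {n : ℕ} {φ ψ f v : EuclideanSpace ℝ (Fin n) → ℝ}
  {H : EuclideanSpace ℝ (Fin n) →L[ℝ] EuclideanSpace ℝ (Fin n)} {a μ : ℝ}
  {S : Set (EuclideanSpace ℝ (Fin n))}

/-- The vector field whose divergence is computed in Rellich's identity. -/
noncomputable def rellichField (X : EuclideanSpace ℝ (Fin n) → EuclideanSpace ℝ (Fin n))
    (v : EuclideanSpace ℝ (Fin n) → ℝ) (x : EuclideanSpace ℝ (Fin n)) :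
    EuclideanSpace ℝ (Fin n) :=
  (2 * ⟪X x, ∇ v x⟫) • ∇ v x - ‖∇ v x‖ ^ 2 • X x

lemma contDiff_rellichField {X : EuclideanSpace ℝ (Fin n) → EuclideanSpace ℝ (Fin n)}
    (hX : ContDiff ℝ 1 X) (hv : ContDiff ℝ 2 v) : ContDiff ℝ 1 (rellichField X v) := by
  have hgrad := contDiff_gradient hv (m := 1) (by norm_num)
  exact ((contDiff_const.mul (hX.inner ℝ hgrad)).smul hgrad).sub ((hgrad.norm_sq ℝ).smul hX)

theorem vdiv_rellichField {X : EuclideanSpace ℝ (Fin n) → EuclideanSpace ℝ (Fin n)}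
    {x : EuclideanSpace ℝ (Fin n)} (hX : DifferentiableAt ℝ X x) (hv : ContDiffAt ℝ 2 v x) :
    vdiv (rellichField X v) x =
      2 * ⟪X x, ∇ v x⟫ * lap v x + 2 * ⟪fderiv ℝ X x (∇ v x), ∇ v x⟫ - ‖∇ v x‖ ^ 2 * vdiv X x := by
  have hgrad := (contDiffAt_gradient hv (m := 1) (by norm_num)).differentiableAt one_ne_zero
  have hinner : DifferentiableAt ℝ (fun y => 2 * ⟪X y, ∇ v y⟫) x :=
    (hX.inner ℝ hgrad).const_mul 2
  have hsq : DifferentiableAt ℝ (fun y => ‖∇ v y‖ ^ 2) x := hgrad.norm_sq ℝ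
  have fderiv_inner : fderiv ℝ (fun y => 2 * ⟪X y, ∇ v y⟫) x (∇ v x) =
      2 * (⟪fderiv ℝ (∇ v) x (X x), ∇ v x⟫ + ⟪fderiv ℝ X x (∇ v x), ∇ v x⟫) := by
    rw [fderiv_const_mul (hX.inner ℝ hgrad), smul_apply, fderiv_inner_apply ℝ hX hgrad,
      real_inner_comm, inner_fderiv_gradient_comm hv, smul_eq_mul]
  have fderiv_norm_sq : fderiv ℝ (fun y => ‖∇ v y‖ ^ 2) x (X x) =
      2 * ⟪fderiv ℝ (∇ v) x (X x), ∇ v x⟫ := by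
    rw [hgrad.hasFDerivAt.norm_sq.fderiv]
    simp [real_inner_comm (∇ v x)]
  unfold rellichField
  rw [vdiv_sub (hinner.fun_smul hgrad) (hsq.fun_smul hX), vdiv_smul hinner hgrad, vdiv_smul hsq hX,
    fderiv_inner, fderiv_norm_sq, lap]
  ring

/-- For `ψ` with constant Laplacian `lap ψ 0`, split `exp ψ * lap (exp (-ψ) * v)` as `P + Q` with
`P = lap v + (‖∇ ψ‖ ^ 2 - 2 * b) * v` and `Q = -2 * ⟪∇ ψ, ∇ v⟫ + (2 * b - lap ψ 0) * v`, the
symmetric and antisymmetric parts of the conjugated Laplacian up to the shift `2 * b`. This field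
is the boundary term in the integration by parts of `2 * P * Q`. -/
noncomputable def carlemanFlux (ψ v : EuclideanSpace ℝ (Fin n) → ℝ) (b : ℝ)
    (x : EuclideanSpace ℝ (Fin n)) : EuclideanSpace ℝ (Fin n) :=
  (2 * (2 * b - lap ψ 0)) • v x • ∇ v x - (2 : ℝ) • rellichField (∇ ψ) v x -
    (2 : ℝ) • ((‖∇ ψ x‖ ^ 2 - 2 * b) * v x ^ 2) • ∇ ψ x

lemma contDiff_carlemanFlux (hψ : ContDiff ℝ 2 ψ) (hv : ContDiff ℝ 2 v) (b : ℝ) :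
    ContDiff ℝ 1 (carlemanFlux ψ v b) := by
  have hv1 : ContDiff ℝ 1 v := hv.of_le one_le_two
  have hgψ := contDiff_gradient hψ (m := 1) (by norm_num)
  have hgv := contDiff_gradient hv (m := 1) (by norm_num)
  have hrel := contDiff_rellichField hgψ hv
  have hsq := hgψ.norm_sq ℝ
  unfold carlemanFlux
  fun_prop

lemma hasCompactSupport_carlemanFlux (hvc : HasCompactSupport v) (b : ℝ) :
    HasCompactSupport (carlemanFlux ψ v b) :=
  hasCompactSupport_of_eq_zero_of_gradient_eq_zero hvc fun x hx hgrad => by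
    simp [carlemanFlux, rellichField, hx, hgrad]

theorem vdiv_carlemanFlux (hψ : HasConstHessian ψ H) (hv : ContDiff ℝ 2 v) (b : ℝ)
    (x : EuclideanSpace ℝ (Fin n)) :
    vdiv (carlemanFlux ψ v b) x + 4 * (⟪H (∇ v x), ∇ v x⟫ - b * ‖∇ v x‖ ^ 2) +
        4 * (⟪H (∇ ψ x), ∇ ψ x⟫ + b * ‖∇ ψ x‖ ^ 2 - 2 * b ^ 2) * v x ^ 2 =
      2 * (lap v x + (‖∇ ψ x‖ ^ 2 - 2 * b) * v x) *
        (-2 * ⟪∇ ψ x, ∇ v x⟫ + (2 * b - lap ψ x) * v x) := by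
  have hv1 : DifferentiableAt ℝ v x := hv.differentiable two_ne_zero x
  have hgψ := contDiff_gradient hψ.contDiff (m := 1) (by norm_num)
  have hgψ' := hgψ.differentiable one_ne_zero x
  have hgv' := (contDiff_gradient hv (m := 1) (by norm_num)).differentiable one_ne_zero x
  have hrel := (contDiff_rellichField hgψ hv).differentiable one_ne_zero x
  have hq : DifferentiableAt ℝ (fun y => ‖∇ ψ y‖ ^ 2 - 2 * b) x := (hgψ'.norm_sq ℝ).sub_const _
  have hqv : DifferentiableAt ℝ (fun y => (‖∇ ψ y‖ ^ 2 - 2 * b) * v y ^ 2) x := hq.mul (hv1.pow 2)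
  have fderiv_qv : fderiv ℝ (fun y => (‖∇ ψ y‖ ^ 2 - 2 * b) * v y ^ 2) x (∇ ψ x) =
      2 * (‖∇ ψ x‖ ^ 2 - 2 * b) * v x * ⟪∇ ψ x, ∇ v x⟫ + 2 * ⟪H (∇ ψ x), ∇ ψ x⟫ * v x ^ 2 := by
    have h := (((hψ.hasFDerivAt_gradient x).norm_sq).sub_const (2 * b)).fun_mul
      (hv1.hasFDerivAt.pow 2)
    rw [h.fderiv]
    simp only [Nat.add_one_sub_one, pow_one, nsmul_eq_mul, Nat.cast_ofNat, add_apply, smul_apply,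
      smul_eq_mul, ContinuousLinearMap.comp_apply, coe_innerSL_apply, inner_gradient_right,
      Real.ringHom_apply, real_inner_comm (∇ ψ x)]
    ring
  unfold carlemanFlux
  rw [vdiv_sub, vdiv_sub, vdiv_const_smul, vdiv_const_smul, vdiv_const_smul,
    vdiv_smul_gradient hv1 hv.contDiffAt, vdiv_rellichField hgψ' hv.contDiffAt, vdiv_smul hqv hgψ',
    fderiv_qv, hψ.fderiv_gradient, ← lap, hψ.lap_eq_lap 0 x, real_inner_self_eq_norm_sq]
  · ring
  all_goals fun_prop

lemma vdiv_carlemanFlux_add_le (hψ : HasConstHessian ψ H) (hv : ContDiff ℝ 2 v) (b : ℝ)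
    (x : EuclideanSpace ℝ (Fin n)) :
    vdiv (carlemanFlux ψ v b) x + 4 * (⟪H (∇ v x), ∇ v x⟫ - b * ‖∇ v x‖ ^ 2) +
        4 * (⟪H (∇ ψ x), ∇ ψ x⟫ + b * ‖∇ ψ x‖ ^ 2 - 2 * b ^ 2) * v x ^ 2 ≤
      (Real.exp (ψ x) * lap (fun y => Real.exp (-ψ y) * v y) x) ^ 2 := by
  rw [vdiv_carlemanFlux hψ hv b x, lap_exp_neg_mul hψ.contDiff hv, ← mul_assoc, ← Real.exp_add,
    add_neg_cancel, Real.exp_zero, one_mul]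
  set symmPart := lap v x + (‖∇ ψ x‖ ^ 2 - 2 * b) * v x
  set antisymmPart := -2 * ⟪∇ ψ x, ∇ v x⟫ + (2 * b - lap ψ x) * v x
  calc 2 * symmPart * antisymmPart ≤ (symmPart + antisymmPart) ^ 2 := by
        linarith [sq_nonneg symmPart, sq_nonneg antisymmPart, add_sq symmPart antisymmPart]
    _ = _ := by ring

lemma IsCarlemanWeight.vdiv_carlemanFlux_add_mul_le {B τ : ℝ} (hφ : IsCarlemanWeight φ H a μ S)
    (hv : ContDiff ℝ 2 v) {x : EuclideanSpace ℝ (Fin n)} (hvS : v x ≠ 0 → x ∈ S ∧ ‖∇ φ x‖ ≤ B)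
    (hτ : 1 ≤ τ) (hτa : 4 * a ^ 2 ≤ τ * μ) :
    vdiv (carlemanFlux (fun y => τ * φ y) v (τ * a)) x +
        τ * μ / (1 + B ^ 2) * (v x ^ 2 + ‖∇ v x - v x • τ • ∇ φ x‖ ^ 2) ≤
      (Real.exp (τ * φ x) * lap (fun y => Real.exp (-(τ * φ y)) * v y) x) ^ 2 := by
  refine le_trans ?_ (vdiv_carlemanFlux_add_le (hφ.const_mul τ) hv (τ * a) x)
  have h := hφ.mul_sq_add_norm_sub_sq_le hτ hτa hvS (∇ v x)
  rw [← div_le_iff₀' (by positivity), ← div_mul_eq_mul_div] at h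
  rw [add_assoc]
  gcongr
  refine h.trans_eq ?_
  simp only [gradient_const_mul (hφ.differentiable x), smul_apply, map_smul, real_inner_smul_left,
    real_inner_smul_right, norm_smul, mul_pow, Real.norm_eq_abs, sq_abs]
  ring

theorem IsCarlemanWeight.integral_conjugate_le {B τ : ℝ} (hφ : IsCarlemanWeight φ H a μ S)
    (hv : ContDiff ℝ 2 v) (hvc : HasCompactSupport v)
    (hvS : ∀ x, v x ≠ 0 → x ∈ S ∧ ‖∇ φ x‖ ≤ B) (hτ : 1 ≤ τ) (hτa : 4 * a ^ 2 ≤ τ * μ) :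
    τ * ∫ x, (v x ^ 2 + ‖∇ v x - v x • τ • ∇ φ x‖ ^ 2) ≤
      (1 + B ^ 2) / μ *
        ∫ x, (Real.exp (τ * φ x) * lap (fun y => Real.exp (-(τ * φ y)) * v y) x) ^ 2 := by
  have hφc := hφ.contDiff
  have hψ := hφ.const_mul τ
  have hμ := hφ.margin_pos
  have hgφ := (contDiff_gradient hφc (m := 1) (by norm_num)).continuous
  have hgv := (contDiff_gradient hv (m := 1) (by norm_num)).continuous
  have hf : ContDiff ℝ 2 fun y => Real.exp (-(τ * φ y)) * v y :=
    (contDiff_const.mul hφc).neg.exp.mul hv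
  have hlap := continuous_lap hf
  have hfc : HasCompactSupport fun y => Real.exp (-(τ * φ y)) * v y := hvc.mul_left
  have hlapc := hasCompactSupport_lap hfc
  have integrable_left : Integrable fun x => v x ^ 2 + ‖∇ v x - v x • τ • ∇ φ x‖ ^ 2 :=
    Continuous.integrable_of_hasCompactSupport (by fun_prop)
      (hasCompactSupport_of_eq_zero_of_gradient_eq_zero hvc fun x hx hgrad => by simp [hx, hgrad])
  have integrable_right : Integrable fun x =>
      (Real.exp (τ * φ x) * lap (fun y => Real.exp (-(τ * φ y)) * v y) x) ^ 2 :=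
    Continuous.integrable_of_hasCompactSupport (by fun_prop)
      (hlapc.mul_left.comp_left (g := fun t : ℝ => t ^ 2) (by simp))
  have integral_le := integral_le_integral_of_vdiv_add_le
    (contDiff_carlemanFlux hψ.contDiff hv (τ * a)) (hasCompactSupport_carlemanFlux hvc (τ * a))
    (integrable_left.const_mul (τ * μ / (1 + B ^ 2))) integrable_right
    fun x => hφ.vdiv_carlemanFlux_add_mul_le hv (hvS x) hτ hτa
  rw [integral_const_mul, div_mul_eq_mul_div, div_le_iff₀' (by positivity), mul_right_comm,
    ← le_div_iff₀ hμ] at integral_le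
  rwa [div_mul_eq_mul_div]

theorem IsCarlemanWeight.carleman_estimate {B τ : ℝ} (hφ : IsCarlemanWeight φ H a μ S)
    (hf : ContDiff ℝ 2 f) (hfc : HasCompactSupport f)
    (hfS : ∀ x, f x ≠ 0 → x ∈ S ∧ ‖∇ φ x‖ ≤ B) (hτ : 1 ≤ τ) (hτa : 4 * a ^ 2 ≤ τ * μ) :
    τ * ∫ x, Real.exp (2 * τ * φ x) * (f x ^ 2 + ‖∇ f x‖ ^ 2) ≤
      (1 + B ^ 2) / μ * ∫ x, Real.exp (2 * τ * φ x) * lap f x ^ 2 := by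
  have hφc := hφ.contDiff
  have hv : ContDiff ℝ 2 fun y => Real.exp (τ * φ y) * f y := (contDiff_const.mul hφc).exp.mul hf
  have hvc : HasCompactSupport fun y => Real.exp (τ * φ y) * f y := hfc.mul_left
  have exp_two_mul (x) : Real.exp (2 * τ * φ x) = Real.exp (τ * φ x) ^ 2 := by
    rw [← Real.exp_nat_mul]
    congr 1
    push_cast
    ring
  have exp_mul_eq (x) : Real.exp (-(τ * φ x)) * (Real.exp (τ * φ x) * f x) = f x := by
    rw [← mul_assoc, ← Real.exp_add, neg_add_cancel, Real.exp_zero, one_mul]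
  have gradient_f (x) : ∇ f x = Real.exp (-(τ * φ x)) •
      (∇ (fun y => Real.exp (τ * φ y) * f y) x - (Real.exp (τ * φ x) * f x) • τ • ∇ φ x) := by
    have h := gradient_exp_neg_mul ((hφ.const_mul τ).differentiable x)
      (hv.differentiable two_ne_zero x)
    simpa only [exp_mul_eq, gradient_const_mul (hφ.differentiable x)] using h
  have norm_sq_eq (x) : ‖∇ (fun y => Real.exp (τ * φ y) * f y) x -
      (Real.exp (τ * φ x) * f x) • τ • ∇ φ x‖ ^ 2 = Real.exp (τ * φ x) ^ 2 * ‖∇ f x‖ ^ 2 := by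
    rw [gradient_f, norm_smul, Real.norm_eq_abs, Real.abs_exp, ← mul_pow, ← mul_assoc,
      ← Real.exp_add, add_neg_cancel, Real.exp_zero, one_mul]
  have h := hφ.integral_conjugate_le hv hvc (fun x hx => hfS x (right_ne_zero_of_mul hx)) hτ hτa
  simpa only [exp_mul_eq, norm_sq_eq, exp_two_mul, mul_pow, ← mul_add] using h

end Carleman

section Concentration

variable {α : Type*} [MeasurableSpace α] {ν : Measure α} {φ g h : α → ℝ} {C M c : ℝ}

lemma integral_exp_mul_le {τ : ℝ} (hτ : 0 ≤ τ) (hM : 0 ≤ M) (hg : ∀ x, 0 ≤ g x)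
    (hh : ∀ x, 0 ≤ h x) (hle : ∀ x, c < φ x → h x ≤ M * g x) (hh_int : Integrable h ν)
    (hg_exp : Integrable (fun x => Real.exp (2 * τ * φ x) * g x) ν)
    (hh_exp : Integrable (fun x => Real.exp (2 * τ * φ x) * h x) ν) :
    ∫ x, Real.exp (2 * τ * φ x) * h x ∂ν ≤
      M * ∫ x, Real.exp (2 * τ * φ x) * g x ∂ν + Real.exp (2 * τ * c) * ∫ x, h x ∂ν := by
  rw [← integral_const_mul, ← integral_const_mul,
    ← integral_add (hg_exp.const_mul M) (hh_int.const_mul _)]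
  refine integral_mono hh_exp ((hg_exp.const_mul M).add (hh_int.const_mul _)) fun x => ?_
  change _ ≤ M * (Real.exp (2 * τ * φ x) * g x) + Real.exp (2 * τ * c) * h x
  have hgx : 0 ≤ M * (Real.exp (2 * τ * φ x) * g x) := by have := hg x; positivity
  have hhx : 0 ≤ Real.exp (2 * τ * c) * h x := by have := hh x; positivity
  rcases lt_or_ge c (φ x) with hx | hx
  · have := mul_le_mul_of_nonneg_left (hle x hx) (Real.exp_pos (2 * τ * φ x)).le
    linarith
  · have : Real.exp (2 * τ * φ x) * h x ≤ Real.exp (2 * τ * c) * h x := by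
      have := hh x
      gcongr
    linarith

lemma exp_mul_setIntegral_le {τ : ℝ} (hτ : 0 ≤ τ) (hφ : Measurable φ) (hg : ∀ x, 0 ≤ g x)
    (hg_int : Integrable g ν) (hg_exp : Integrable (fun x => Real.exp (2 * τ * φ x) * g x) ν) :
    Real.exp (2 * τ * c) * ∫ x in {x | c < φ x}, g x ∂ν ≤
      ∫ x, Real.exp (2 * τ * φ x) * g x ∂ν := by
  rw [← integral_const_mul]
  refine (setIntegral_mono_on (hg_int.const_mul _).integrableOn hg_exp.integrableOn
    (measurableSet_lt measurable_const hφ) fun x (hx : c < φ x) => ?_).trans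
    (setIntegral_le_integral hg_exp (ae_of_all _ fun x => ?_))
  · have := hg x
    gcongr
  · exact mul_nonneg (Real.exp_pos _).le (hg x)

theorem setIntegral_eq_zero_of_mul_integral_exp_le (hφ : Measurable φ) (hC : 0 ≤ C) (hM : 0 ≤ M)
    (hg : ∀ x, 0 ≤ g x) (hh : ∀ x, 0 ≤ h x) (hle : ∀ x, c < φ x → h x ≤ M * g x)
    (hg_int : Integrable g ν) (hh_int : Integrable h ν)
    (hg_exp : ∀ τ, Integrable (fun x => Real.exp (2 * τ * φ x) * g x) ν)
    (hh_exp : ∀ τ, Integrable (fun x => Real.exp (2 * τ * φ x) * h x) ν)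
    (hcarleman : ∀ᶠ τ in atTop, τ * ∫ x, Real.exp (2 * τ * φ x) * g x ∂ν ≤
      C * ∫ x, Real.exp (2 * τ * φ x) * h x ∂ν) :
    ∫ x in {x | c < φ x}, g x ∂ν = 0 := by
  set J := ∫ x in {x | c < φ x}, g x ∂ν
  have bound : ∀ᶠ τ in atTop, (τ - C * M) * J ≤ C * ∫ x, h x ∂ν := by
    filter_upwards [hcarleman, eventually_ge_atTop 0, eventually_ge_atTop (C * M)]
      with τ hcar hτ hτCM
    have hJ : Real.exp (2 * τ * c) * J ≤ _ := exp_mul_setIntegral_le hτ hφ hg hg_int (hg_exp τ)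
    have hh_le := integral_exp_mul_le hτ hM hg hh hle hh_int (hg_exp τ) (hh_exp τ)
    refine le_of_mul_le_mul_left ?_ (Real.exp_pos (2 * τ * c))
    linarith [mul_le_mul_of_nonneg_left hJ (sub_nonneg.2 hτCM), mul_le_mul_of_nonneg_left hh_le hC]
  refine (setIntegral_nonneg_of_ae (ae_of_all _ hg)).antisymm' (le_of_not_gt fun hJ => ?_)
  have tendsto : Tendsto (fun τ => (τ - C * M) * J) atTop atTop :=
    (tendsto_atTop_add_const_right _ _ tendsto_id).atTop_mul_const hJ
  obtain ⟨τ, hτ, hτ'⟩ := (bound.and (tendsto.eventually_gt_atTop _)).exists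
  exact hτ.not_gt hτ'

end Concentration

section LocalUniqueness

variable {n : ℕ} {φ : EuclideanSpace ℝ (Fin n) → ℝ}
  {H : EuclideanSpace ℝ (Fin n) →L[ℝ] EuclideanSpace ℝ (Fin n)} {a μ c : ℝ}
  {y : EuclideanSpace ℝ (Fin n)}

theorem IsCarlemanWeight.eq_zero_of_lap_sq_le {S : Set (EuclideanSpace ℝ (Fin n))}
    {f : EuclideanSpace ℝ (Fin n) → ℝ} {M : ℝ} (hφ : IsCarlemanWeight φ H a μ S)
    (hf : ContDiff ℝ 2 f) (hfc : HasCompactSupport f) (hfS : Function.support f ⊆ S) (hM : 0 ≤ M)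
    (hle : ∀ x, c < φ x → lap f x ^ 2 ≤ M * (f x ^ 2 + ‖∇ f x‖ ^ 2)) :
    ∀ x, c < φ x → f x = 0 := by
  have hφ_cont : Continuous φ := hφ.differentiable.continuous
  have hgφ := (contDiff_gradient hφ.contDiff (m := 1) (by norm_num)).continuous
  have hgf := (contDiff_gradient hf (m := 1) (by norm_num)).continuous
  have hf_cont := hf.continuous
  have hlap := continuous_lap hf
  obtain ⟨B, hB⟩ := hfc.isCompact.exists_bound_of_continuousOn hgφ.continuousOn
  have hsum : HasCompactSupport fun x => f x ^ 2 + ‖∇ f x‖ ^ 2 :=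
    hasCompactSupport_of_eq_zero_of_gradient_eq_zero hfc fun x hx hgrad => by simp [hx, hgrad]
  have hlapc : HasCompactSupport fun x => lap f x ^ 2 :=
    (hasCompactSupport_lap hfc).comp_left (g := fun t : ℝ => t ^ 2) (by simp)
  have integral_zero : ∫ x in {x | c < φ x}, (f x ^ 2 + ‖∇ f x‖ ^ 2) = 0 := by
    refine setIntegral_eq_zero_of_mul_integral_exp_le hφ_cont.measurable
      (C := (1 + B ^ 2) / μ) (div_nonneg (by positivity) hφ.margin_pos.le) hM
      (fun x => by positivity) (fun x => sq_nonneg (lap f x)) hle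
      (Continuous.integrable_of_hasCompactSupport (by fun_prop) hsum)
      (Continuous.integrable_of_hasCompactSupport (by fun_prop) hlapc)
      (fun τ => Continuous.integrable_of_hasCompactSupport (by fun_prop) hsum.mul_left)
      (fun τ => Continuous.integrable_of_hasCompactSupport (by fun_prop) hlapc.mul_left) ?_
    filter_upwards [eventually_ge_atTop 1, eventually_ge_atTop (4 * a ^ 2 / μ)] with τ hτ hτa
    exact hφ.carleman_estimate hf hfc (fun x hx => ⟨hfS hx, hB x (subset_tsupport f hx)⟩) hτ
      ((div_le_iff₀ hφ.margin_pos).1 hτa)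
  have ae_zero : (fun x => f x ^ 2 + ‖∇ f x‖ ^ 2) =ᵐ[volume.restrict {x | c < φ x}] 0 :=
    (setIntegral_eq_zero_iff_of_nonneg_ae (ae_of_all _ fun x => by positivity)
      (Continuous.integrable_of_hasCompactSupport (by fun_prop) hsum).integrableOn).1 integral_zero
  have eqOn_zero := Measure.eqOn_open_of_ae_eq ae_zero (isOpen_lt continuous_const hφ_cont)
    (Continuous.continuousOn (by fun_prop)) continuousOn_const
  intro x hx
  have : f x ^ 2 + ‖∇ f x‖ ^ 2 = 0 := eqOn_zero hx
  exact pow_eq_zero_iff two_ne_zero |>.1 (by nlinarith [sq_nonneg (f x), sq_nonneg ‖∇ f x‖])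

lemma contDiff_contDiffBump_mul {E : Type*} [NormedAddCommGroup E] [NormedSpace ℝ E]
    [FiniteDimensional ℝ E] {z : E} {k : ℕ∞} (χ : ContDiffBump z) {w : E → ℝ}
    (hw : ∀ x ∈ closedBall z χ.rOut, ContDiffAt ℝ k w x) : ContDiff ℝ k fun x => χ x * w x := by
  refine contDiff_iff_contDiffAt.2 fun x => ?_
  by_cases hx : x ∈ closedBall z χ.rOut
  · exact χ.contDiffAt.mul (hw x hx)
  · have χ_eq_zero : χ =ᶠ[𝓝 x] 0 := notMem_tsupport_iff_eventuallyEq.1 (χ.tsupport_eq ▸ hx)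
    refine contDiffAt_const (c := (0 : ℝ)) |>.congr_of_eventuallyEq ?_
    filter_upwards [χ_eq_zero] with x' hx'
    simp [hx']

lemma exists_eventually_sq_le_of_isBigO {α : Type*} {l : Filter α} {f g h : α → ℝ}
    (hf : f =O[l] fun x => |g x| + |h x|) :
    ∃ M, 0 ≤ M ∧ ∀ᶠ x in l, f x ^ 2 ≤ M * (g x ^ 2 + h x ^ 2) := by
  obtain ⟨C, hC⟩ := hf.bound
  refine ⟨C ^ 2 * 2, by positivity, hC.mono fun x hx => ?_⟩
  rw [Real.norm_eq_abs, Real.norm_of_nonneg (by positivity)] at hx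
  calc f x ^ 2 = |f x| ^ 2 := (sq_abs _).symm
    _ ≤ (C * (|g x| + |h x|)) ^ 2 := by gcongr
    _ = C ^ 2 * (|g x| + |h x|) ^ 2 := mul_pow ..
    _ ≤ C ^ 2 * (2 * (|g x| ^ 2 + |h x| ^ 2)) := by gcongr; exact add_sq_le
    _ = C ^ 2 * 2 * (g x ^ 2 + h x ^ 2) := by rw [sq_abs, sq_abs, mul_assoc]

theorem IsCarlemanWeight.eventuallyEq_zero_of_closedBall {w : EuclideanSpace ℝ (Fin n) → ℝ}
    {ρ M : ℝ} (hρ : 0 < ρ) (hφ : IsCarlemanWeight φ H a μ (closedBall y ρ)) (hM : 0 ≤ M)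
    (hc : 0 < c) (hw : ∀ x ∈ closedBall y ρ, ContDiffAt ℝ 2 w x)
    (hlap : ∀ x ∈ closedBall y ρ, lap w x ^ 2 ≤ M * (w x ^ 2 + ‖∇ w x‖ ^ 2))
    (hsupp : ∀ x ∈ closedBall y ρ, w x ≠ 0 → φ x ≤ φ y - c * ‖x - y‖ ^ 2) : w =ᶠ[𝓝 y] 0 := by
  have hφ_cont : Continuous φ := hφ.differentiable.continuous
  let χ : ContDiffBump y := ⟨ρ / 2, ρ, half_pos hρ, half_lt_self hρ⟩
  have mem_closedBall {x} (hx : χ x * w x ≠ 0) : x ∈ closedBall y ρ :=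
    ball_subset_closedBall (χ.support_eq ▸ left_ne_zero_of_mul hx)
  have eventuallyEq_w {x} (hx : x ∈ ball y (ρ / 2)) : (fun z => χ z * w z) =ᶠ[𝓝 x] w := by
    filter_upwards [χ.eventuallyEq_one_of_mem_ball hx] with z hz
    simp [hz]
  have le_of_mem_tsupport : ∀ x ∈ tsupport fun x => χ x * w x, φ x ≤ φ y - c * ‖x - y‖ ^ 2 :=
    closure_minimal (fun x hx => hsupp x (mem_closedBall hx) (right_ne_zero_of_mul hx))
      (isClosed_le hφ_cont (by fun_prop))
  have χw_eq_zero := hφ.eq_zero_of_lap_sq_le (c := φ y - c * (ρ / 2) ^ 2)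
    (contDiff_contDiffBump_mul χ hw) χ.hasCompactSupport.mul_right (fun x => mem_closedBall) hM
    fun x hx => ?_
  · filter_upwards [eventuallyEq_w (mem_ball_self (half_pos hρ)),
      hφ_cont.continuousAt.eventually_const_lt
        (sub_lt_self (φ y) (b := c * (ρ / 2) ^ 2) (by positivity))] with z hz hφz
    exact hz.symm.trans (χw_eq_zero z hφz)
  by_cases hx_supp : x ∈ tsupport fun x => χ x * w x
  · have hxρ : x ∈ ball y (ρ / 2) := by
      have : c * ‖x - y‖ ^ 2 < c * (ρ / 2) ^ 2 := by linarith [le_of_mem_tsupport x hx_supp]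
      rw [mem_ball_iff_norm]
      exact lt_of_pow_lt_pow_left₀ 2 (half_pos hρ).le (lt_of_mul_lt_mul_left this hc.le)
    rw [lap_congr (eventuallyEq_w hxρ), (eventuallyEq_w hxρ).eq_of_nhds,
      (eventuallyEq_w hxρ).gradient_eq]
    exact hlap x (ball_subset_closedBall (ball_subset_ball (half_le_self hρ.le) hxρ))
  · have eventuallyEq_zero : (fun x => χ x * w x) =ᶠ[𝓝 x] fun _ => 0 :=
      notMem_tsupport_iff_eventuallyEq.1 hx_supp
    rw [lap_congr eventuallyEq_zero, eventuallyEq_zero.eq_of_nhds, eventuallyEq_zero.gradient_eq]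
    simp [lap, vdiv]

theorem HasConstHessian.eventuallyEq_zero_of_isBigO_lap {w : EuclideanSpace ℝ (Fin n) → ℝ}
    (hφ : HasConstHessian φ H) (hμ : 0 < μ) (hH : ∀ p, (a + μ) * ‖p‖ ^ 2 ≤ ⟪H p, p⟫)
    (hy : 0 < ⟪H (∇ φ y), ∇ φ y⟫ + a * ‖∇ φ y‖ ^ 2) (hw : ContDiffAt ℝ 2 w y)
    (hlap : lap w =O[𝓝 y] fun x => |w x| + ‖∇ w x‖) (hc : 0 < c)
    (hsupp : ∀ᶠ x in 𝓝 y, w x ≠ 0 → φ x ≤ φ y - c * ‖x - y‖ ^ 2) : w =ᶠ[𝓝 y] 0 := by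
  obtain ⟨μ', S, hS, hφS⟩ := hφ.exists_isCarlemanWeight hμ hH hy
  obtain ⟨M, hM, hlap_sq⟩ := exists_eventually_sq_le_of_isBigO (h := fun x => ‖∇ w x‖)
    (by simpa only [abs_norm] using hlap)
  obtain ⟨ρ, hρ, hball⟩ := nhds_basis_closedBall.eventually_iff.1
    ((hw.eventually (by simp)).and (hlap_sq.and (hsupp.and hS)))
  exact IsCarlemanWeight.eventuallyEq_zero_of_closedBall hρ
    (hφS.mono fun x hx => (hball hx).2.2.2) hM hc (fun x hx => (hball hx).1)
    (fun x hx => (hball hx).2.1) fun x hx => (hball hx).2.2.1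

end LocalUniqueness

section SphereWeight

variable {F : Type*} [NormedAddCommGroup F] [InnerProductSpace ℝ F] {p y : F}

/-- A weight for unique continuation at `y` across a sphere whose inward normal at `y` is `p`. The
term `⟪p, x - y⟫ ^ 2` makes the weight convex along `p`, and `-2 * ‖x - y‖ ^ 2` makes it negative
near `y` outside the sphere centred at `y + p`. -/
noncomputable def sphereWeight (p y x : F) : ℝ :=
  ⟪p, x - y⟫ + 10 / ‖p‖ ^ 2 * ⟪p, x - y⟫ ^ 2 - 2 * ‖x - y‖ ^ 2

lemma sphereWeight_self : sphereWeight p y y = 0 := by simp [sphereWeight]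

lemma eventually_sphereWeight_le :
    ∀ᶠ x in 𝓝 y, x ∉ ball (y + p) ‖p‖ → sphereWeight p y x ≤ -‖x - y‖ ^ 2 := by
  have small : ∀ᶠ x in 𝓝 y, |10 / ‖p‖ ^ 2 * ⟪p, x - y⟫| < 1 :=
    (Continuous.tendsto' (by fun_prop) y 0 (by simp)).eventually_lt_const one_pos
  filter_upwards [small] with x hx hx_ball
  have inner_le : 2 * ⟪p, x - y⟫ ≤ ‖x - y‖ ^ 2 := by
    have hle : ‖p‖ ≤ ‖(x - y) - p‖ := by
      simpa only [mem_ball_iff_norm, not_lt, sub_sub] using hx_ball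
    have := pow_le_pow_left₀ (norm_nonneg p) hle 2
    rw [norm_sub_sq_real, real_inner_comm] at this
    linarith
  have hx' := abs_lt.1 hx
  unfold sphereWeight
  rcases le_total 0 ⟪p, x - y⟫ with inner_nonneg | inner_nonpos
  · nlinarith [sq_nonneg ‖x - y‖, mul_le_mul_of_nonneg_left hx'.2.le inner_nonneg]
  · nlinarith [sq_nonneg ‖x - y‖, mul_le_mul_of_nonpos_left hx'.1.le inner_nonpos]

variable [CompleteSpace F]

lemma hasGradientAt_sphereWeight (x : F) :
    HasGradientAt (sphereWeight p y)
      ((1 + 20 / ‖p‖ ^ 2 * ⟪p, x - y⟫) • p - (4 : ℝ) • (x - y)) x := by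
  have hinner : HasFDerivAt (fun x => ⟪p, x - y⟫) (innerSL ℝ p) x :=
    (innerSL ℝ p).hasFDerivAt.comp x ((hasFDerivAt_id x).sub_const y)
  have hnorm := ((hasFDerivAt_id x).sub_const y).norm_sq
  refine hasGradientAt_iff_hasFDerivAt.2 (((hinner.add
    ((hinner.pow 2).const_mul (10 / ‖p‖ ^ 2))).sub (hnorm.const_mul 2)).congr_fderiv ?_)
  ext w
  simp only [Nat.add_one_sub_one, pow_one, nsmul_eq_mul, Nat.cast_ofNat, id_eq, map_sub,
    ContinuousLinearMap.comp_id, sub_apply, add_apply, coe_innerSL_apply, smul_apply, smul_eq_mul,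
    map_smul, InnerProductSpace.toDual_apply_apply]
  ring

lemma hasConstHessian_sphereWeight :
    HasConstHessian (sphereWeight p y) ((20 / ‖p‖ ^ 2) • InnerProductSpace.rankOne ℝ p p -
      (4 : ℝ) • ContinuousLinearMap.id ℝ F) where
  differentiable x := (hasGradientAt_sphereWeight x).hasFDerivAt.differentiableAt
  hasFDerivAt_gradient x := by
    rw [funext fun x => (hasGradientAt_sphereWeight (p := p) (y := y) x).gradient]
    have hinner : HasFDerivAt (fun x => ⟪p, x - y⟫) (innerSL ℝ p) x :=
      (innerSL ℝ p).hasFDerivAt.comp x ((hasFDerivAt_id x).sub_const y)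
    refine ((((hinner.const_mul (20 / ‖p‖ ^ 2)).const_add 1).smul_const p).sub
      (((hasFDerivAt_id x).sub_const y).const_smul (4 : ℝ))).congr_fderiv ?_
    ext w
    simp [mul_smul]

end SphereWeight

theorem eventuallyEq_zero_of_eqOn_ball {n : ℕ} {w : EuclideanSpace ℝ (Fin n) → ℝ}
    {y z : EuclideanSpace ℝ (Fin n)} (hyz : y ≠ z) (hw : ContDiffAt ℝ 2 w y)
    (hlap : lap w =O[𝓝 y] fun x => |w x| + ‖∇ w x‖)
    (hball : EqOn w 0 (ball z (dist y z))) : w =ᶠ[𝓝 y] 0 := by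
  obtain ⟨p, rfl⟩ : ∃ p, z = y + p := ⟨z - y, (add_sub_cancel y z).symm⟩
  have hp : p ≠ 0 := by simpa using hyz
  have hp_sq : 0 < ‖p‖ ^ 2 := by positivity
  refine (hasConstHessian_sphereWeight (p := p) (y := y)).eventuallyEq_zero_of_isBigO_lap
    (a := -8) (μ := 4) (c := 1) four_pos (fun v => ?_) ?_ hw hlap one_pos ?_
  · have : 0 ≤ 20 / ‖p‖ ^ 2 * (⟪p, v⟫ * ⟪p, v⟫) :=
      mul_nonneg (by positivity) (mul_self_nonneg _)
    simp only [sub_apply, smul_apply, InnerProductSpace.rankOne_apply,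
      ContinuousLinearMap.id_apply, inner_sub_left, real_inner_smul_left,
      real_inner_self_eq_norm_sq]
    linarith
  · have gradient_self : ∇ (sphereWeight p y) y = p := by
      simp [(hasGradientAt_sphereWeight y).gradient]
    simp only [gradient_self, sub_apply, smul_apply, InnerProductSpace.rankOne_apply,
      ContinuousLinearMap.id_apply, inner_sub_left, real_inner_smul_left,
      real_inner_self_eq_norm_sq]
    rw [← mul_assoc, div_mul_cancel₀ _ hp_sq.ne']
    linarith
  · filter_upwards [eventually_sphereWeight_le] with x hx hwx
    rw [sphereWeight_self, zero_sub, one_mul]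
    refine hx fun hx_mem => hwx (hball ?_)
    simpa using hx_mem

lemma exists_ball_subset_of_mem_closure {X : Type*} [PseudoMetricSpace X] [ProperSpace X]
    {Z : Set X} {p : X} {R : ℝ} (hZ : IsOpen Z) (hp : p ∈ closure Z) (hpZ : p ∉ Z) (hR : 0 < R) :
    ∃ y z, y ∉ Z ∧ z ∈ Z ∧ dist y p < R ∧ ball z (dist y z) ⊆ Z := by
  obtain ⟨z, hz, hpz⟩ := mem_closure_iff.1 hp (R / 2) (half_pos hR)
  obtain ⟨y, hy, infDist_eq⟩ := hZ.isClosed_compl.exists_infDist_eq_dist ⟨p, hpZ⟩ z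
  refine ⟨y, z, hy, hz, ?_, ?_⟩
  · have : dist y z ≤ dist p z := by
      rw [dist_comm y, ← infDist_eq, dist_comm p]
      exact infDist_le_dist_of_mem hpZ
    linarith [dist_triangle_right y p z]
  · rw [dist_comm, ← infDist_eq]
    exact ball_infDist_compl_subset

section UniqueContinuation

variable {n : ℕ} {Ω : Set (EuclideanSpace ℝ (Fin n))}

theorem eqOn_zero_of_isBigO_lap {w : EuclideanSpace ℝ (Fin n) → ℝ} {x₀ : EuclideanSpace ℝ (Fin n)}
    (hΩ : IsOpen Ω) (hΩconn : IsPreconnected Ω) (hw : ContDiffOn ℝ 2 w Ω)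
    (hlap : ∀ y ∈ Ω, lap w =O[𝓝 y] fun x => |w x| + ‖∇ w x‖) (hx₀ : x₀ ∈ Ω)
    (hw₀ : w =ᶠ[𝓝 x₀] 0) : EqOn w 0 Ω := by
  have hZ : IsOpen {x | w =ᶠ[𝓝 x] 0} := isOpen_setOfPred_eventually_nhds
  have hΩZ : Ω ⊆ {x | w =ᶠ[𝓝 x] 0} := by
    refine hΩconn.subset_of_closure_inter_subset hZ ⟨x₀, hx₀, hw₀⟩ fun p ⟨hp, hpΩ⟩ => ?_
    by_contra hpZ
    obtain ⟨R, hR, hball⟩ := Metric.isOpen_iff.1 hΩ p hpΩ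
    obtain ⟨y, z, hy, hz, hyp, hyz⟩ := exists_ball_subset_of_mem_closure hZ hp hpZ hR
    have hyΩ : y ∈ Ω := hball hyp
    exact hy (eventuallyEq_zero_of_eqOn_ball (ne_of_mem_of_not_mem hz hy).symm
      (hw.contDiffAt (hΩ.mem_nhds hyΩ)) (hlap y hyΩ) fun x hx => (hyz hx).eq_of_nhds)
  exact fun x hx => (hΩZ hx).eq_of_nhds

lemma isBigO_lap_of_eventually_pde {D σ w : EuclideanSpace ℝ (Fin n) → ℝ}
    {y : EuclideanSpace ℝ (Fin n)} (hD : ContDiffAt ℝ 1 D y) (hDy : D y ≠ 0)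
    (hσ : σ =O[𝓝 y] fun _ => (1 : ℝ))
    (hpde : ∀ᶠ x in 𝓝 y, D x * lap w x + ⟪∇ D x, ∇ w x⟫ - σ x * w x = 0) :
    lap w =O[𝓝 y] fun x => |w x| + ‖∇ w x‖ := by
  have hD_inv : (fun x => (D x)⁻¹) =O[𝓝 y] fun _ => (1 : ℝ) :=
    (hD.continuousAt.inv₀ hDy).isBigO_one ℝ
  have hgradD : (∇ D) =O[𝓝 y] fun _ => (1 : ℝ) :=
    (contDiffAt_gradient hD (m := 0) (by norm_num)).continuousAt.isBigO_one ℝ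
  have hw_le : w =O[𝓝 y] fun x => |w x| + ‖∇ w x‖ :=
    .of_norm_le fun x => le_add_of_nonneg_right (norm_nonneg _)
  have hgradw_le : (∇ w) =O[𝓝 y] fun x => |w x| + ‖∇ w x‖ :=
    .of_norm_le fun x => le_add_of_nonneg_left (abs_nonneg _)
  have hinner : (fun x => ⟪∇ D x, ∇ w x⟫) =O[𝓝 y] fun x => |w x| + ‖∇ w x‖ := by
    have : (fun x => ⟪∇ D x, ∇ w x⟫) =O[𝓝 y] fun x => ‖∇ D x‖ * ‖∇ w x‖ :=
      .of_norm_le fun x => norm_inner_le_norm _ _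
    simpa using this.trans (hgradD.norm_left.mul hgradw_le.norm_left)
  have lap_eq : lap w =ᶠ[𝓝 y] fun x => (D x)⁻¹ * (σ x * w x - ⟪∇ D x, ∇ w x⟫) := by
    filter_upwards [hpde, hD.continuousAt.eventually_ne hDy] with x hx hDx
    rw [eq_inv_mul_iff_mul_eq₀ hDx]
    linarith
  refine lap_eq.trans_isBigO ?_
  simpa using hD_inv.mul ((by simpa using hσ.mul hw_le : _ =O[𝓝 y] _).sub hinner)

theorem stmt_19_general {D σ u1 u2 : EuclideanSpace ℝ (Fin n) → ℝ}
    {U : Set (EuclideanSpace ℝ (Fin n))} {k : ℝ} (hΩ : IsOpen Ω) (hΩconn : IsPreconnected Ω)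
    (hD : ContDiffOn ℝ 1 D Ω) (hD0 : ∀ x ∈ Ω, D x ≠ 0)
    (hσ : ∀ x ∈ Ω, σ =O[𝓝 x] fun _ => (1 : ℝ))
    (hu1 : ContDiffOn ℝ 2 u1 Ω) (hu2 : ContDiffOn ℝ 2 u2 Ω)
    (hpde1 : ∀ x ∈ Ω, D x * lap u1 x + ⟪∇ D x, ∇ u1 x⟫ - σ x * u1 x = 0)
    (hpde2 : ∀ x ∈ Ω, D x * lap u2 x + ⟪∇ D x, ∇ u2 x⟫ - σ x * u2 x = 0)
    (hU : IsOpen U) (hUne : U.Nonempty) (hUΩ : U ⊆ Ω) (hk : ∀ x ∈ U, u1 x = k * u2 x) :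
    ∀ x ∈ Ω, u1 x = k * u2 x := by
  have hw : ContDiffOn ℝ 2 (fun x => u1 x - k * u2 x) Ω := hu1.sub (contDiffOn_const.mul hu2)
  have hpde : ∀ x ∈ Ω, D x * lap (fun y => u1 y - k * u2 y) x +
      ⟪∇ D x, ∇ (fun y => u1 y - k * u2 y) x⟫ - σ x * (u1 x - k * u2 x) = 0 := by
    intro x hx
    have hu1x := hu1.contDiffAt (hΩ.mem_nhds hx)
    have hu2x := hu2.contDiffAt (hΩ.mem_nhds hx)
    rw [lap_sub_const_mul hu1x hu2x, gradient_sub_const_mul (hu1x.differentiableAt two_ne_zero)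
      (hu2x.differentiableAt two_ne_zero), inner_sub_right, real_inner_smul_right]
    linear_combination hpde1 x hx - k * hpde2 x hx
  have hlap (y) (hy : y ∈ Ω) := isBigO_lap_of_eventually_pde (hD.contDiffAt (hΩ.mem_nhds hy))
    (hD0 y hy) (hσ y hy) ((hΩ.eventually_mem hy).mono hpde)
  obtain ⟨x₀, hx₀⟩ := hUne
  have hw₀ : (fun x => u1 x - k * u2 x) =ᶠ[𝓝 x₀] 0 :=
    (hU.eventually_mem hx₀).mono fun x hx => sub_eq_zero.2 (hk x hx)
  exact fun x hx => sub_eq_zero.1 (eqOn_zero_of_isBigO_lap hΩ hΩconn hw hlap (hUΩ hx₀) hw₀ hx)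

end UniqueContinuation

/-- unique continuation for ratios of solutions: if `u1, u2` solve
`DΔu + ∇D·∇u − σu = 0` on a connected open `Ω`, `u2 > 0`, and `u1/u2` is constant on a
nonempty open `U ⊆ Ω`, then `u1 = λ·u2` on all of `Ω` for some constant `λ`. -/
theorem stmt_19 {n : ℕ} (Ω : Set (EuclideanSpace ℝ (Fin n)))
    (hΩ : IsOpen Ω) (hΩconn : IsConnected Ω)
    (D σ u1 u2 : EuclideanSpace ℝ (Fin n) → ℝ)
    (hD : ContDiffOn ℝ 1 D Ω)
    (c : ℝ) (hc : 0 < c) (hDc : ∀ x ∈ Ω, c ≤ D x)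
    (hσ : ContinuousOn σ Ω)
    (hu1 : ContDiffOn ℝ 2 u1 Ω) (hu2 : ContDiffOn ℝ 2 u2 Ω)
    (hu2pos : ∀ x ∈ Ω, 0 < u2 x)
    (hpde1 : ∀ x ∈ Ω, D x * lap u1 x + ⟪gradient D x, gradient u1 x⟫ - σ x * u1 x = 0)
    (hpde2 : ∀ x ∈ Ω, D x * lap u2 x + ⟪gradient D x, gradient u2 x⟫ - σ x * u2 x = 0)
    (U : Set (EuclideanSpace ℝ (Fin n))) (hU : IsOpen U) (hUne : U.Nonempty) (hUΩ : U ⊆ Ω)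
    (k : ℝ) (hk : ∀ x ∈ U, u1 x / u2 x = k) :
    ∃ lam : ℝ, ∀ x ∈ Ω, u1 x = lam * u2 x := by
  have u1_eq : ∀ x ∈ U, u1 x = k * u2 x := fun x hx =>
    (div_eq_iff (hu2pos x (hUΩ hx)).ne').1 (hk x hx)
  exact ⟨k, stmt_19_general hΩ hΩconn.isPreconnected hD (fun x hx => (hc.trans_le (hDc x hx)).ne')
    (fun x hx => (hσ.continuousAt (hΩ.mem_nhds hx)).isBigO_one ℝ) hu1 hu2 hpde1 hpde2 hU hUne hUΩ
    u1_eq⟩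
end
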